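/- arXiv:1604.04045 — 2 statements merged into one kernel-verified Lean document; each statement's English description precedes it below -/
import Mathlib

section
/- Let G be a semi-2-tree on n vertices with skeleton T, b blocks, and let r be a simplicial vertex or cut-vertex of G. Then π_t(G,r) = π_t(T,r) + (n−1) + b − 2e(T), where e(T) is the number of edges of T and π_t(T,r) is the t-pebbling number of the rooted tree (T,r). -/
open SimpleGraph

/-- A single pebbling step: remove two pebbles from `u`, add one to a neighbor `v`. -/
def PebStep {V : Type} (G : SimpleGraph V) (C C' : V → ℕ) : Prop :=
  ∃ u v : V, G.Adj u v ∧ 2 ≤ C u ∧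
    C' u + 2 = C u ∧ C' v = C v + 1 ∧ ∀ w, w ≠ u → w ≠ v → C' w = C w

/-- `C` is `t`-fold `r`-solvable. -/
def TSolvable {V : Type} (G : SimpleGraph V) (C : V → ℕ) (r : V) (t : ℕ) : Prop :=
  ∃ C', Relation.ReflTransGen (PebStep G) C C' ∧ t ≤ C' r

/-- The `t`-pebbling number of `G` rooted at `r`. -/
noncomputable def piT {V : Type} (G : SimpleGraph V) (r : V) (t : ℕ) : ℕ :=
  sInf {s | ∀ C : V → ℕ, s ≤ ∑ᶠ v, C v → TSolvable G C r t}

/-- The pebbling number of `G` rooted at `r`. -/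
noncomputable def pin {V : Type} (G : SimpleGraph V) (r : V) : ℕ := piT G r 1

/-- The `t`-pebbling number of `G`. -/
noncomputable def piGt {V : Type} (G : SimpleGraph V) (t : ℕ) : ℕ := ⨆ r, piT G r t

/-- The pebbling number of `G`. -/
noncomputable def piG {V : Type} (G : SimpleGraph V) : ℕ := ⨆ r, pin G r

/-- Eccentricity of `r`. -/
noncomputable def eccG {V : Type} (G : SimpleGraph V) (r : V) : ℕ := ⨆ v, G.dist r v

/-- Diameter of `G`. -/
noncomputable def diamG {V : Type} (G : SimpleGraph V) : ℕ := ⨆ u, eccG G u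

/-- `G` is a 2-tree: either `K₂` or obtained by adding a 2-simplicial vertex to a
2-tree. -/
inductive IsTwoTree : {V : Type} → SimpleGraph V → Prop
  | base {V : Type} (G : SimpleGraph V) (e : V ≃ Fin 2)
      (h : ∀ a b : V, G.Adj a b ↔ a ≠ b) : IsTwoTree G
  | extend {V : Type} (G : SimpleGraph V) (v : V)
      (hdeg : (G.neighborSet v).ncard = 2)
      (hcl : G.IsClique (G.neighborSet v))
      (h : IsTwoTree (G.induce {u | u ≠ v})) : IsTwoTree G

/-- A simplicial vertex: its neighborhood is a clique. -/
def IsSimplicial {V : Type} (G : SimpleGraph V) (v : V) : Prop :=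
  G.IsClique (G.neighborSet v)

/-- A 2-path: a 2-tree with exactly two simplicial vertices. -/
def IsTwoPath {V : Type} (G : SimpleGraph V) : Prop :=
  IsTwoTree G ∧ {v | IsSimplicial G v}.ncard = 2

/-- The edges of the `i`-th fan of a fan decomposition with spine `x` and fan
vertices `v i 1, …, v i (k i)`. -/
def FanEdge {V : Type} (x : ℕ → V) (k : ℕ → ℕ) (v : ℕ → ℕ → V) (i : ℕ)
    (a b : V) : Prop :=
  s(a, b) = s(x (i - 1), x i) ∨ s(a, b) = s(x i, x (i + 1)) ∨
  s(a, b) = s(x (i - 1), v i 1) ∨ s(a, b) = s(v i (k i), x (i + 1)) ∨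
  (∃ j, 1 ≤ j ∧ j < k i ∧ s(a, b) = s(v i j, v i (j + 1))) ∨
  (∃ j, 1 ≤ j ∧ j ≤ k i ∧ s(a, b) = s(x i, v i j))

/-- The set of fan vertices of the `i`-th fan. -/
def FanVerts {V : Type} (k : ℕ → ℕ) (v : ℕ → ℕ → V) (i : ℕ) : Set V :=
  {w | ∃ j, 1 ≤ j ∧ j ≤ k i ∧ w = v i j}

/-- `FanData G d x k v` : the data `(x, k, v)` exhibits `G` as an overlapping fan
graph of diameter `d` with spine `x 0, x 1, …, x d` and, for `1 ≤ i ≤ d − 1`, an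
`x_{i−1}x_{i+1}`-fan centered on `x i` with fan vertices `v i 1, …, v i (k i)`;
consecutive fans are opposite-sided or same-sided, and `G` is the union of the
fans. -/
def FanData {V : Type} (G : SimpleGraph V) (d : ℕ) (x : ℕ → V) (k : ℕ → ℕ)
    (v : ℕ → ℕ → V) : Prop :=
  2 ≤ d ∧
  -- the spine is a shortest path between two vertices realizing the diameter
  (∀ u w : V, G.dist u w ≤ d) ∧ G.dist (x 0) (x d) = d ∧
  (∀ i < d, G.Adj (x i) (x (i + 1))) ∧
  (∀ i ≤ d, ∀ l ≤ d, x i = x l → i = l) ∧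
  -- fan structure
  (∀ i, 1 ≤ i → i ≤ d - 1 →
    1 ≤ k i ∧
    G.Adj (x (i - 1)) (v i 1) ∧
    (∀ j, 1 ≤ j → j < k i → G.Adj (v i j) (v i (j + 1))) ∧
    G.Adj (v i (k i)) (x (i + 1)) ∧
    (∀ j, 1 ≤ j → j ≤ k i → G.Adj (x i) (v i j)) ∧
    (∀ j, 1 ≤ j → j ≤ k i → ∀ j', 1 ≤ j' → j' ≤ k i → v i j = v i j' → j = j') ∧
    (∀ j, 1 ≤ j → j ≤ k i → ∀ l ≤ d, v i j ≠ x l)) ∧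
  -- consecutive fans are opposite-sided or same-sided
  (∀ i, 1 ≤ i → i + 1 ≤ d - 1 →
    (FanVerts k v i ∩ FanVerts k v (i + 1) = ∅) ∨
    (v i (k i) = v (i + 1) 1 ∧
      FanVerts k v i ∩ FanVerts k v (i + 1) = {v i (k i)})) ∧
  -- G is the union of the fans: vertices
  (∀ u : V, (∃ l ≤ d, u = x l) ∨
    ∃ i, 1 ≤ i ∧ i ≤ d - 1 ∧ u ∈ FanVerts k v i) ∧
  -- G is the union of the fans: edges
  (∀ a b : V, G.Adj a b → ∃ i, 1 ≤ i ∧ i ≤ d - 1 ∧ FanEdge x k v i a b)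

/-- `G` is an overlapping fan graph. -/
def IsOverlappingFan {V : Type} (G : SimpleGraph V) : Prop :=
  ∃ (d : ℕ) (x : ℕ → V) (k : ℕ → ℕ) (v : ℕ → ℕ → V), FanData G d x k v

/-- Two edges lie in a common block: they are equal or lie on a common cycle. -/
def SameBlockEdge {V : Type} (G : SimpleGraph V) (e₁ e₂ : Sym2 V) : Prop :=
  e₁ = e₂ ∨ ∃ (u : V) (c : G.Walk u u), c.IsCycle ∧ e₁ ∈ c.edges ∧ e₂ ∈ c.edges

/-- `B` is (the vertex set of) a block of `G`: the union of the endpoints of an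
equivalence class of edges under `SameBlockEdge`. -/
def IsBlockOf {V : Type} (G : SimpleGraph V) (B : Set V) : Prop :=
  ∃ e₀ ∈ G.edgeSet, B = {w | ∃ e ∈ G.edgeSet, SameBlockEdge G e₀ e ∧ w ∈ e}

/-- `v` is a cut-vertex of `G`. -/
def IsCutVertex {V : Type} (G : SimpleGraph V) (v : V) : Prop :=
  G.Connected ∧ ¬ (G.induce {u | u ≠ v}).Connected

/-- `G` is a semi-2-tree: connected, every block is a 2-path, and every cut-vertex
is simplicial in every block containing it. -/
def IsSemiTwoTree {V : Type} (G : SimpleGraph V) : Prop :=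
  G.Connected ∧
  (∀ B : Set V, IsBlockOf G B → IsTwoPath (G.induce B)) ∧
  (∀ v : V, IsCutVertex G v → ∀ B : Set V, IsBlockOf G B →
    ∀ h : v ∈ B, IsSimplicial (G.induce B) ⟨v, h⟩)

/-- `E` is the edge set of a spine of the block `B`: a shortest path between the two
simplicial vertices of the 2-path induced on `B`, realizing its diameter. -/
def IsSpineOf {V : Type} (G : SimpleGraph V) (B : Set V) (E : Set (Sym2 V)) : Prop :=
  ∃ (s₁ s₂ : ↥B) (p : (G.induce B).Walk s₁ s₂),
    s₁ ≠ s₂ ∧ IsSimplicial (G.induce B) s₁ ∧ IsSimplicial (G.induce B) s₂ ∧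
    p.IsPath ∧ p.length = (G.induce B).dist s₁ s₂ ∧
    (∀ a b : ↥B, (G.induce B).dist a b ≤ p.length) ∧
    E = (fun e => Sym2.map Subtype.val e) '' {e | e ∈ p.edges}

/-- `T` is a skeleton of the semi-2-tree `G`: the union of spines of its blocks. -/
def IsSkeleton {V : Type} (G T : SimpleGraph V) : Prop :=
  T ≤ G ∧ ∃ S : Set V → Set (Sym2 V),
    (∀ B : Set V, IsBlockOf G B → IsSpineOf G B (S B)) ∧
    T.edgeSet = ⋃ B ∈ {B : Set V | IsBlockOf G B}, S B

/-- The configuration `D` can be extracted from `C` by a flow of pebbling moves, where only the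
net balance at each vertex is recorded and not the order of the moves. -/
def FlowReach {V : Type} [Fintype V] (G : SimpleGraph V) (C D : V → ℕ) : Prop :=
  ∃ f : V → V → ℕ, (∀ u v, f u v ≠ 0 → G.Adj u v) ∧
    ∀ v, 2 * ∑ w, f v w + D v ≤ C v + ∑ u, f u v

namespace FlowReach

variable {V : Type} [Fintype V] {G H : SimpleGraph V} {C C' D D' E : V → ℕ}

theorem of_le (h : D ≤ C) : FlowReach G C D :=
  ⟨fun _ _ => 0, by simp, fun v => by simpa using h v⟩

theorem add (h : FlowReach G C D) (h' : FlowReach G C' D') :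
    FlowReach G (C + C') (D + D') := by
  obtain ⟨f, hf, hb⟩ := h
  obtain ⟨g, hg, hc⟩ := h'
  refine ⟨fun u v => f u v + g u v, fun u v huv => ?_, fun v => ?_⟩
  · by_cases h0 : f u v = 0
    · exact hg u v (by simpa [h0] using huv)
    · exact hf u v h0
  · have := hb v
    have := hc v
    simp only [Finset.sum_add_distrib, Pi.add_apply]
    omega

theorem trans (h : FlowReach G C D) (h' : FlowReach G D E) : FlowReach G C E := by
  obtain ⟨f, hf, hb⟩ := h
  obtain ⟨g, hg, hc⟩ := h'
  refine ⟨fun u v => f u v + g u v, fun u v huv => ?_, fun v => ?_⟩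
  · by_cases h0 : f u v = 0
    · exact hg u v (by simpa [h0] using huv)
    · exact hf u v h0
  · have := hb v
    have := hc v
    simp only [Finset.sum_add_distrib]
    omega

theorem mono (h : FlowReach G C D) (hC : C ≤ C') (hD : D' ≤ D) : FlowReach G C' D' :=
  ((of_le hC).trans h).trans (of_le hD)

theorem mono_graph (hGH : G ≤ H) (h : FlowReach G C D) : FlowReach H C D := by
  obtain ⟨f, hf, hb⟩ := h
  exact ⟨f, fun u v huv => hGH (hf u v huv), hb⟩

theorem move [DecidableEq V] {u v : V} (huv : G.Adj u v) (m : ℕ) :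
    FlowReach G (Pi.single u (2 * m)) (Pi.single v m) := by
  refine ⟨fun a b => if a = u ∧ b = v then m else 0, fun a b hab => ?_, fun w => ?_⟩
  · have : a = u ∧ b = v := by by_contra h; simp [h] at hab
    rw [this.1, this.2]; exact huv
  · have h1 : ∑ b, (if w = u ∧ b = v then m else 0) = if w = u then m else 0 := by
      by_cases h : w = u <;> simp [h]
    have h2 : ∑ a, (if a = u ∧ w = v then m else 0) = if w = v then m else 0 := by
      by_cases h : w = v <;> simp [h]
    simp only [h1, h2, Pi.single_apply]
    split_ifs <;> omega

theorem walk [DecidableEq V] {u v : V} (p : G.Walk u v) (m : ℕ) :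
    FlowReach G (Pi.single u (m * 2 ^ p.length)) (Pi.single v m) := by
  induction p with
  | nil => exact of_le (by simp)
  | cons h p ih =>
    refine FlowReach.trans ?_ ih
    have := move h (m * 2 ^ p.length)
    rwa [show 2 * (m * 2 ^ p.length) = m * 2 ^ (p.length + 1) by ring] at this

/-- A flow whose total is not realized by any available move is balanced, so it can be dropped. -/
theorem exists_reach [DecidableEq V] (h : FlowReach G C D) :
    ∃ C', Relation.ReflTransGen (PebStep G) C C' ∧ D ≤ C' := by
  obtain ⟨f, hf, hb⟩ := h
  induction hn : ∑ u, ∑ v, f u v using Nat.strong_induction_on generalizing f C with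
  | _ n ih =>
  by_cases hex : ∃ u, 2 ≤ C u ∧ 0 < ∑ v, f u v
  · obtain ⟨u, hu, hpos⟩ := hex
    obtain ⟨v, -, hv⟩ := Finset.exists_ne_zero_of_sum_ne_zero hpos.ne'
    have huv := hf u v hv
    have hne : u ≠ v := huv.ne
    let g : V → V → ℕ := fun a b => if a = u ∧ b = v then 1 else 0
    let f' : V → V → ℕ := fun a b => f a b - g a b
    have hfg : ∀ a b, f a b = f' a b + g a b := fun a b => by
      by_cases hab : a = u ∧ b = v
      · have : 0 < f a b := by rw [hab.1, hab.2]; omega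
        simp only [f', g, hab, and_self, if_true] at *; omega
      · simp [f', g, hab]
    have g1 : ∀ a, ∑ b, g a b = if a = u then 1 else 0 := fun a => by
      by_cases h : a = u <;> simp [g, h]
    have g2 : ∀ b, ∑ a, g a b = if b = v then 1 else 0 := fun b => by
      by_cases h : b = v <;> simp [g, h]
    let C₁ : V → ℕ := fun w => if w = u then C u - 2 else if w = v then C v + 1 else C w
    have hstep : PebStep G C C₁ := by
      refine ⟨u, v, huv, hu, ?_, ?_, fun w hwu hwv => ?_⟩
      · simp only [C₁, if_true]; omega
      · simp [C₁, hne.symm]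
      · simp [C₁, hwu, hwv]
    obtain ⟨C', hC', hD⟩ := ih (∑ a, ∑ b, f' a b) (by
        rw [← hn]
        simp only [hfg, Finset.sum_add_distrib, g1]
        simp) f' (fun a b hab => hf a b (by rw [hfg]; omega)) (C := C₁) (fun w => by
        have := hb w
        simp only [hfg, Finset.sum_add_distrib, g1, g2] at this
        simp only [C₁]
        split_ifs at this ⊢ with h1 h2 h2
        · exact absurd (h1.symm.trans h2) hne
        · subst h1; omega
        · subst h2; omega
        · omega) rfl
    exact ⟨C', Relation.ReflTransGen.head hstep hC', hD⟩
  · push Not at hex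
    refine ⟨C, Relation.ReflTransGen.refl, fun w => ?_⟩
    have hle : ∀ u, ∑ v, f u v ≤ ∑ v, f v u := fun u => by
      have := hb u
      by_cases h2 : 2 ≤ C u
      · have := hex u h2; omega
      · omega
    have heq : ∑ u, ∑ v, f u v = ∑ u, ∑ v, f v u := Finset.sum_comm
    have : ∑ v, f w v = ∑ v, f v w :=
      (Finset.sum_eq_sum_iff_of_le (fun u _ => hle u)).1 heq w (Finset.mem_univ _)
    have := hb w
    show D w ≤ C w
    omega

theorem of_step (h : PebStep G C C') : FlowReach G C C' := by
  classical
  obtain ⟨u, v, huv, h2, hu, hv, hw⟩ := h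
  have := (of_le (G := G) (le_refl fun w => if w = u then C u - 2 else C w)).add (move huv 1)
  refine this.mono (fun w => ?_) (fun w => ?_)
  · simp only [Pi.add_apply, Pi.single_apply]
    split_ifs with h
    · subst h; omega
    · simp
  · simp only [Pi.add_apply, Pi.single_apply]
    have hne := huv.ne
    split_ifs with h h' h'
    · exact absurd (h.symm.trans h') hne
    · subst h; omega
    · subst h'; omega
    · rw [hw w h h']; simp

theorem of_reach (h : Relation.ReflTransGen (PebStep G) C C') : FlowReach G C C' := by
  induction h with
  | refl => exact of_le le_rfl
  | tail _ h ih => exact ih.trans (of_step h)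

theorem tSolvable_iff [DecidableEq V] {r : V} {t : ℕ} :
    TSolvable G C r t ↔ FlowReach G C (Pi.single r t) := by
  constructor
  · rintro ⟨C', h, ht⟩
    refine (of_reach h).mono le_rfl fun w => ?_
    by_cases hw : w = r
    · subst hw; simpa using ht
    · simp [hw]
  · intro h
    obtain ⟨C', h, hD⟩ := exists_reach h
    exact ⟨C', h, by simpa using hD r⟩

/-- The weight-function bound, in which the vertices of `A` carry one pebble each. -/
theorem weight [DecidableEq V] {A : Finset V} {y : V → ℕ} {x s : V} {m k : ℕ}
    (hx : x ∉ A) (hs : s ∉ A)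
    (h1 : ∀ u v, G.Adj u v → u ∉ A → y v ≤ 2 * y u)
    (h2 : ∀ u v, G.Adj u v → u ∈ A → y v ≤ y u)
    (h : FlowReach G (fun v => (if v = s then m else 0) + if v ∈ A then 1 else 0)
      (Pi.single x k)) : k * y x ≤ m * y s := by
  obtain ⟨f, hf, hb⟩ := h
  have key : ∀ u, ∑ v, f u v * y v + (if u = x then k * y x else 0) ≤
      (if u = s then m * y s else 0) + ∑ v, f v u * y u := fun u => by
    have hbu := hb u
    rw [← Finset.sum_mul]
    by_cases hu : u ∈ A
    · have hux : u ≠ x := fun h => hx (h ▸ hu)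
      have hus : u ≠ s := fun h => hs (h ▸ hu)
      simp only [hu, hux, hus, if_true, if_false, Pi.single_apply] at hbu ⊢
      calc ∑ v, f u v * y v + 0 ≤ ∑ v, f u v * y u := by
            rw [add_zero]
            refine Finset.sum_le_sum fun v _ => ?_
            by_cases h0 : f u v = 0
            · simp [h0]
            · exact Nat.mul_le_mul_left _ (h2 u v (hf u v h0) hu)
        _ = (∑ v, f u v) * y u := by rw [Finset.sum_mul]
        _ ≤ 0 + (∑ v, f v u) * y u := by
            rw [zero_add]; exact Nat.mul_le_mul_right _ (by omega)
    · have hle : ∑ v, f u v * y v ≤ (2 * ∑ v, f u v) * y u := by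
        rw [mul_assoc, mul_comm, mul_assoc, Finset.sum_mul]
        refine Finset.sum_le_sum fun v _ => ?_
        by_cases h0 : f u v = 0
        · simp [h0]
        · rw [mul_comm (y u)]; exact Nat.mul_le_mul_left _ (h1 u v (hf u v h0) hu)
      have := Nat.mul_le_mul_right (y u) hbu
      simp only [hu, if_false, Pi.single_apply, add_mul] at this
      refine (Nat.add_le_add_right hle _).trans (le_trans (le_of_eq ?_) (this.trans (le_of_eq ?_)))
      · congr 1; split_ifs with h
        · rw [h]
        · simp
      · congr 1; split_ifs with h
        · rw [h]; simp
        · simp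
  have hs := Finset.sum_le_sum fun u (_ : u ∈ Finset.univ) => key u
  simp only [Finset.sum_add_distrib, Finset.sum_ite_eq', Finset.mem_univ, if_true] at hs
  rw [Finset.sum_comm (f := fun x i => f i x * y x)] at hs
  omega

theorem le_sum [DecidableEq V] {x : V} {k : ℕ} (h : FlowReach G C (Pi.single x k)) :
    k ≤ ∑ v, C v := by
  obtain ⟨f, hf, hb⟩ := h
  have := Finset.sum_le_sum fun v (_ : v ∈ Finset.univ) => hb v
  simp only [Finset.sum_add_distrib, ← Finset.mul_sum] at this
  rw [Finset.sum_comm (f := fun x i => f i x)] at this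
  simp only [Finset.sum_pi_single', Finset.mem_univ, if_true] at this
  omega

theorem exists_max [DecidableEq V] (G : SimpleGraph V) (C : V → ℕ) (x : V) :
    ∃ k, ∀ t, FlowReach G C (Pi.single x t) ↔ t ≤ k := by
  classical
  let P : ℕ → Prop := fun k => FlowReach G C (Pi.single x k)
  have hP : P (Nat.findGreatest P (∑ v, C v)) :=
    Nat.findGreatest_spec (Nat.zero_le _) (of_le (by simp))
  refine ⟨Nat.findGreatest P (∑ v, C v), fun t => ⟨fun h => Nat.le_findGreatest h.le_sum h,
    fun h => FlowReach.mono hP le_rfl (Pi.single_le_single.2 h)⟩⟩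

end FlowReach

theorem sum_coe_of_forall_notMem_eq_zero {V : Type} [Fintype V] {S : Set V} [Fintype S]
    {g : V → ℕ} (hg : ∀ v, v ∉ S → g v = 0) : ∑ v : S, g v = ∑ v, g v := by
  classical
  rw [← Finset.sum_subtype (Finset.univ.filter (· ∈ S)) (by simp) g]
  exact Finset.sum_filter_of_ne fun v _ hv => by by_contra h; exact hv (hg v h)

/-- The edges of `G` inside `S`, as a graph on all vertices. -/
def SimpleGraph.restr {V : Type} (G : SimpleGraph V) (S : Set V) : SimpleGraph V where
  Adj a b := G.Adj a b ∧ a ∈ S ∧ b ∈ S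
  symm := ⟨fun _ _ h => ⟨h.1.symm, h.2.2, h.2.1⟩⟩
  loopless := ⟨fun _ h => h.1.ne rfl⟩

theorem SimpleGraph.restr_mono {V : Type} (G : SimpleGraph V) {S S' : Set V} (h : S ⊆ S') :
    G.restr S ≤ G.restr S' := fun _ _ hab => ⟨hab.1, h hab.2.1, h hab.2.2⟩

theorem SimpleGraph.restr_univ {V : Type} (H : SimpleGraph V) : H.restr Set.univ = H := by
  ext a b; simp [restr]

namespace FlowReach

variable {V : Type} [Fintype V]

theorem induce_iff {G : SimpleGraph V} {S : Set V} [Fintype S]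
    (hG : ∀ u v, G.Adj u v → u ∈ S ∧ v ∈ S) {C D : V → ℕ} (hD : ∀ v, v ∉ S → D v = 0) :
    FlowReach (G.induce S) (fun v => C v) (fun v => D v) ↔ FlowReach G C D := by
  classical
  constructor
  · rintro ⟨f, hf, hb⟩
    let g : V → V → ℕ := fun u v => if h : u ∈ S ∧ v ∈ S then f ⟨u, h.1⟩ ⟨v, h.2⟩ else 0
    refine ⟨g, fun u v huv => ?_, fun v => ?_⟩
    · by_cases h : u ∈ S ∧ v ∈ S
      · exact hf ⟨u, h.1⟩ ⟨v, h.2⟩ (by simpa [g, h] using huv)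
      · simp [g, h] at huv
    · by_cases hv : v ∈ S
      · have h1 : ∑ w, g v w = ∑ w : S, f ⟨v, hv⟩ w := by
          rw [← sum_coe_of_forall_notMem_eq_zero (S := S) fun w hw => by simp [g, hw]]
          simp [g, hv]
        have h2 : ∑ w, g w v = ∑ w : S, f w ⟨v, hv⟩ := by
          rw [← sum_coe_of_forall_notMem_eq_zero (S := S) (g := fun w => g w v)
            fun w hw => by simp [g, hw]]
          simp [g, hv]
        rw [h1, h2]
        exact hb ⟨v, hv⟩
      · simp [g, hv, hD v hv]
  · rintro ⟨f, hf, hb⟩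
    refine ⟨fun u v => f u v, fun u v huv => hf u v huv, fun v => ?_⟩
    have h0 : ∀ a b, a ∉ S ∨ b ∉ S → f a b = 0 := fun a b hab => by
      by_contra h
      have := hG a b (hf a b h)
      tauto
    rw [sum_coe_of_forall_notMem_eq_zero (S := S) (g := fun w => f v w)
        fun w hw => h0 _ _ (Or.inr hw),
      sum_coe_of_forall_notMem_eq_zero (S := S) (g := fun w => f w v)
        fun w hw => h0 _ _ (Or.inl hw)]
    exact hb v

/-- Flow through a cut-vertex `x` decomposes into flow of the part away from the root to `x`,
followed by flow in the part containing the root. -/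
theorem split [DecidableEq V] {H K : SimpleGraph V} {X Y : Set V} {x r : V}
    (hH : ∀ u v, H.Adj u v → u ∈ X ∧ v ∈ X) (hK : ∀ u v, K.Adj u v → u ∈ Y ∧ v ∈ Y)
    (hXY : ∀ v, v ∈ X → v ∈ Y → v = x) {C C' : V → ℕ} (hC : ∀ v, v ∉ X → C v = 0)
    (hC' : ∀ v, v ∉ Y → C' v = 0) (hx : C' x = 0) (hr : r ∈ X) {t : ℕ}
    (h : FlowReach (H ⊔ K) (C + C') (Pi.single r t)) :
    ∃ k, FlowReach K C' (Pi.single x k) ∧ FlowReach H (C + Pi.single x k) (Pi.single r t) := by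
  classical
  obtain ⟨f, hf, hb⟩ := h
  let fH : V → V → ℕ := fun u v => if H.Adj u v then f u v else 0
  let fK : V → V → ℕ := fun u v => if K.Adj u v then f u v else 0
  have hsum : ∀ u v, f u v = fH u v + fK u v := fun u v => by
    by_cases h1 : H.Adj u v
    · have h2 : ¬ K.Adj u v := fun h2 => h1.ne <|
        (hXY u (hH _ _ h1).1 (hK _ _ h2).1).trans (hXY v (hH _ _ h1).2 (hK _ _ h2).2).symm
      simp [fH, fK, h1, h2]
    · by_cases h2 : K.Adj u v
      · simp [fH, fK, h1, h2]
      · have : f u v = 0 := by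
          by_contra h0
          rcases hf u v h0 with h | h
          exacts [h1 h, h2 h]
        simp [fH, fK, h1, h2, this]
  have hH1 : ∀ v, v ∉ X → ∑ w, fH v w = 0 ∧ ∑ w, fH w v = 0 := fun v hv =>
    ⟨Finset.sum_eq_zero fun w _ => if_neg fun h => hv (hH _ _ h).1,
      Finset.sum_eq_zero fun w _ => if_neg fun h => hv (hH _ _ h).2⟩
  have hK1 : ∀ v, v ∉ Y → ∑ w, fK v w = 0 ∧ ∑ w, fK w v = 0 := fun v hv =>
    ⟨Finset.sum_eq_zero fun w _ => if_neg fun h => hv (hK _ _ h).1,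
      Finset.sum_eq_zero fun w _ => if_neg fun h => hv (hK _ _ h).2⟩
  have hfH : ∀ u v, fH u v ≠ 0 → H.Adj u v := fun u v h => by
    by_contra h0; simp [fH, h0] at h
  have hfK : ∀ u v, fK u v ≠ 0 → K.Adj u v := fun u v h => by
    by_contra h0; simp [fK, h0] at h
  simp only [hsum, Finset.sum_add_distrib, Pi.add_apply, Pi.single_apply] at hb
  refine ⟨∑ u, fK u x - 2 * ∑ w, fK x w, ?_, fH, hfH, fun v => ?_⟩
  · rcases le_total (∑ u, fK u x) (2 * ∑ w, fK x w) with hle | hle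
    · rw [Nat.sub_eq_zero_of_le hle]
      exact of_le (by simp)
    · refine ⟨fK, hfK, fun v => ?_⟩
      have := hb v
      by_cases hvx : v = x
      · subst hvx; simp; omega
      · by_cases hv : v ∈ Y
        · have hvX : v ∉ X := fun h => hvx (hXY v h hv)
          have hvr : v ≠ r := fun h => hvX (h ▸ hr)
          rw [(hH1 v hvX).1, (hH1 v hvX).2, hC v hvX, if_neg hvr] at this
          rw [Pi.single_apply, if_neg hvx]
          omega
        · have := hK1 v hv
          simp [hvx, this]
  · have := hb v
    simp only [Pi.add_apply, Pi.single_apply]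
    by_cases hvx : v = x
    · subst hvx; simp [hx] at *; omega
    · by_cases hv : v ∈ X
      · have hvY : v ∉ Y := fun h => hvx (hXY v hv h)
        rw [(hK1 v hvY).1, (hK1 v hvY).2, hC' v hvY] at this
        rw [if_neg hvx]
        omega
      · have hvr : v ≠ r := fun h => hv (h ▸ hr)
        have := hH1 v hv
        simp [hvr, this]

end FlowReach

/-- Every configuration on `X₁` can be replaced by one on `X₂` with at least `c` more pebbles, no
fewer pebbles on `E`, which is at most as powerful towards the root `r`. -/
def Transfer {V : Type} [Fintype V] [DecidableEq V] (H₁ : SimpleGraph V) (X₁ : Set V)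
    (H₂ : SimpleGraph V) (X₂ E : Set V) (r : V) (c : ℤ) : Prop :=
  ∀ C : V → ℕ, (∀ v, v ∉ X₁ → C v = 0) → ∃ C' : V → ℕ, (∀ v, v ∉ X₂ → C' v = 0) ∧
    (∀ v ∈ E, C v ≤ C' v) ∧ ((∑ v, C v : ℕ) : ℤ) + c ≤ (∑ v, C' v : ℕ) ∧
    ∀ t, FlowReach H₂ C' (Pi.single r t) → FlowReach H₁ C (Pi.single r t)

/-- The variant of `Transfer` for an end block with root `x` and opposite end `s`, where no pebbles
are placed on the root. -/
def EndTransfer {V : Type} [Fintype V] [DecidableEq V] (H₁ : SimpleGraph V) (Y₁ : Set V)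
    (H₂ : SimpleGraph V) (Y₂ : Set V) (x s : V) (c : ℤ) : Prop :=
  ∀ C : V → ℕ, (∀ v, v ∉ Y₁ → C v = 0) → C x = 0 → ∃ C' : V → ℕ,
    (∀ v, v ∉ Y₂ → C' v = 0) ∧ C' x = 0 ∧ C s ≤ C' s ∧
    ((∑ v, C v : ℕ) : ℤ) + c ≤ (∑ v, C' v : ℕ) ∧
    ∀ t, FlowReach H₂ C' (Pi.single x t) → FlowReach H₁ C (Pi.single x t)

theorem Transfer.glue {V : Type} [Fintype V] [DecidableEq V]
    {H₁ H₂ K₁ K₂ : SimpleGraph V} {X₁ X₂ Y₁ Y₂ E : Set V} {r x s : V} {c c' : ℤ}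
    (h : Transfer H₁ X₁ H₂ X₂ E r c) (h' : EndTransfer K₁ Y₁ K₂ Y₂ x s c')
    (hH₂ : ∀ u v, H₂.Adj u v → u ∈ X₂ ∧ v ∈ X₂) (hK₂ : ∀ u v, K₂.Adj u v → u ∈ Y₂ ∧ v ∈ Y₂)
    (hx₁ : x ∈ X₁) (hx₂ : x ∈ X₂) (hxE : x ∈ E) (hr : r ∈ X₂)
    (hXY₁ : ∀ v, v ∈ X₁ → v ∈ Y₁ → v = x)
    (hXY₂ : ∀ v, v ∈ X₂ → v ∈ Y₂ → v = x)
    (hE : ∀ v ∈ E, v ∈ Y₁ → v = x ∨ v = s) :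
    Transfer (H₁ ⊔ K₁) (X₁ ∪ Y₁) (H₂ ⊔ K₂) (X₂ ∪ Y₂) E r (c + c') := by
  classical
  intro C hC
  let CX : V → ℕ := fun v => if v ∈ X₁ then C v else 0
  let CY : V → ℕ := fun v => if v ∈ X₁ then 0 else C v
  have hsplit : CX + CY = C := by
    ext v; by_cases hv : v ∈ X₁ <;> simp [CX, CY, hv]
  have hCY0 : ∀ v, v ∉ Y₁ → CY v = 0 := fun v hv => by
    by_cases hvX : v ∈ X₁
    · simp [CY, hvX]
    · simpa [CY, hvX] using hC v (by simp [hvX, hv])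
  obtain ⟨k, hk⟩ := FlowReach.exists_max K₁ CY x
  obtain ⟨C₁, h1, h2, h3, h4⟩ := h (CX + Pi.single x k) fun v hv => by
    have : v ≠ x := fun h => hv (h ▸ hx₁)
    simp [CX, hv, this]
  obtain ⟨C₂, g1, g2, g3, g4, g5⟩ := h' CY hCY0 (by simp [CY, hx₁])
  have hkx : k ≤ C₁ x := by
    have := h2 x hxE
    simp at this; omega
  let C₀ : V → ℕ := fun v => if v = x then C₁ x - k else C₁ v
  have hC₀ : C₀ + Pi.single x k = C₁ := by
    ext v; by_cases hv : v = x
    · subst hv; simp [C₀, hkx]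
    · simp [C₀, hv]
  refine ⟨C₀ + C₂, fun v hv => ?_, fun v hv => ?_, ?_, fun t ht => ?_⟩
  · rw [Set.mem_union, not_or] at hv
    have : v ≠ x := fun h => hv.1 (h ▸ hx₂)
    simp [C₀, this, h1 v hv.1, g1 v hv.2]
  · have h5 := h2 v hv
    have h6 := congrFun hC₀ v
    have h7 := congrFun hsplit v
    simp only [Pi.add_apply] at h5 h6 h7 ⊢
    by_cases hvX : v ∈ X₁
    · have : CY v = 0 := by simp [CY, hvX]
      omega
    · by_cases hvY : v ∈ Y₁
      · rcases hE v hv hvY with rfl | rfl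
        · exact absurd hx₁ hvX
        · have : CX v = 0 := by simp [CX, hvX]
          omega
      · have := hC v (by simp [hvX, hvY])
        omega
  · have e1 : ∑ v, C v = ∑ v, CX v + ∑ v, CY v := by
      rw [← Finset.sum_add_distrib, ← hsplit]; rfl
    have e2 : ∑ v, C₁ v = ∑ v, C₀ v + k := by
      rw [← hC₀]; simp [Finset.sum_add_distrib]
    simp only [Pi.add_apply, Finset.sum_add_distrib, Finset.sum_pi_single', Finset.mem_univ,
      if_true] at h3 ⊢
    omega
  · obtain ⟨k', hk1, hk2⟩ := FlowReach.split hH₂ hK₂ hXY₂ (C := C₀) (fun v hv => by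
      have : v ≠ x := fun h => hv (h ▸ hx₂)
      simp [C₀, this, h1 v hv]) g1 g2 hr ht
    have hle : k' ≤ k := (hk k').1 (g5 k' hk1)
    have hD := h4 t (hk2.mono (by
      rw [← hC₀]; exact add_le_add le_rfl (Pi.single_le_single.2 hle)) le_rfl)
    have hY := ((hk k).2 le_rfl).mono_graph (le_sup_right : K₁ ≤ H₁ ⊔ K₁)
    have := (FlowReach.of_le (G := H₁ ⊔ K₁) (le_refl CX)).add hY
    rw [hsplit] at this
    exact this.trans (hD.mono_graph le_sup_left)

/-- The vertices `c 0, …, c (l - 1)` form a path all of whose vertices are adjacent to `p ∈ S`,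
with `c 0` also adjacent to `q ∈ S`, and there are no further edges to `S`. -/
structure Layer {V : Type} (G : SimpleGraph V) (S : Finset V) (p q : V) (c : ℕ → V) (l : ℕ) :
    Prop where
  inj : ∀ i < l, ∀ j < l, c i = c j → i = j
  notMem : ∀ j < l, c j ∉ S
  memp : p ∈ S
  memq : q ∈ S
  adjp : ∀ j < l, G.Adj (c j) p
  adjq : 0 < l → G.Adj (c 0) q
  chain : ∀ j, j + 1 < l → G.Adj (c (j + 1)) (c j)
  exact : ∀ j < l, ∀ u ∈ S, G.Adj (c j) u → u = p ∨ u = q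

/-- Any `k * 2 ^ i + |S| - 2 * i` pebbles on `S` suffice to move `k` pebbles to `x`. -/
def SolvesAll {V : Type} [Fintype V] [DecidableEq V] (G : SimpleGraph V) (x : V) (S : Finset V)
    (i : ℕ) : Prop :=
  ∀ (k : ℕ) (C : V → ℕ), k * 2 ^ i + S.card ≤ ∑ v ∈ S, C v + 2 * i →
    FlowReach G C (Pi.single x k)

/-- One pebble fewer than in `SolvesAll` suffices if `k * 2 ^ i - 1` of the pebbles arrive at the
pair `p`, `q` and we may choose which of these two vertices receives the last one. -/
def SolvesPair {V : Type} [Fintype V] [DecidableEq V] (G : SimpleGraph V) (x : V) (S : Finset V)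
    (p q : V) (i : ℕ) : Prop :=
  ∀ (k : ℕ) (C : V → ℕ), 1 ≤ k → S.card ≤ ∑ v ∈ S, C v + 2 * i →
    FlowReach G (C + Pi.single p (k * 2 ^ i - 1)) (Pi.single x k) ∨
    (1 ≤ i ∧ FlowReach G (C + Pi.single p (k * 2 ^ i - 2) + Pi.single q 1) (Pi.single x k))

theorem Finset.odd_of_card_le_sum_mod_two {a : ℕ → ℕ} {m : ℕ}
    (h : m ≤ ∑ j ∈ Finset.range m, a j % 2) : ∀ j < m, a j % 2 = 1 := by
  have hle : ∀ j ∈ Finset.range m, a j % 2 ≤ 1 := fun j _ => by omega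
  have h2 := Finset.sum_le_sum hle
  have heq : ∑ j ∈ Finset.range m, a j % 2 = ∑ j ∈ Finset.range m, 1 := by
    simp only [Finset.sum_const, Finset.card_range, smul_eq_mul, mul_one] at h2 ⊢
    omega
  exact fun j hj => (Finset.sum_eq_sum_iff_of_le hle).1 heq j (Finset.mem_range.2 hj)

theorem Finset.sum_eq_two_mul_half_add_sum_mod_two (a : ℕ → ℕ) (m : ℕ) :
    ∑ j ∈ Finset.range m, a j =
      2 * ∑ j ∈ Finset.range m, a j / 2 + ∑ j ∈ Finset.range m, a j % 2 := by
  rw [Finset.mul_sum, ← Finset.sum_add_distrib]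
  exact Finset.sum_congr rfl fun j _ => by omega

theorem Finset.sum_range_mod_two_le (a : ℕ → ℕ) (m : ℕ) :
    ∑ j ∈ Finset.range m, a j % 2 ≤ m := by
  have : ∑ j ∈ Finset.range m, a j % 2 ≤ ∑ j ∈ Finset.range m, 1 :=
    Finset.sum_le_sum fun j _ => by omega
  simpa using this

namespace Layer

theorem injOn {V : Type} {G : SimpleGraph V} {S : Finset V} {p q : V} {c : ℕ → V} {l : ℕ}
    (hL : Layer G S p q c l) : Set.InjOn c (Finset.range l) := fun i hi j hj h =>
  hL.inj i (by simpa using hi) j (by simpa using hj) h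

section

variable {V : Type} [DecidableEq V] {G : SimpleGraph V} {S : Finset V} {p q : V}
  {c : ℕ → V} {l : ℕ}

theorem disjoint (hL : Layer G S p q c l) : Disjoint S ((Finset.range l).image c) := by
  rw [Finset.disjoint_right]
  simp only [Finset.mem_image, Finset.mem_range]
  rintro _ ⟨j, hj, rfl⟩
  exact hL.notMem j hj

theorem card_union (hL : Layer G S p q c l) :
    (S ∪ (Finset.range l).image c).card = S.card + l := by
  rw [Finset.card_union_of_disjoint hL.disjoint, Finset.card_image_of_injOn hL.injOn,
    Finset.card_range]

theorem sum_union (hL : Layer G S p q c l) (C : V → ℕ) :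
    ∑ v ∈ S ∪ (Finset.range l).image c, C v =
      ∑ v ∈ S, C v + ∑ j ∈ Finset.range l, C (c j) := by
  rw [Finset.sum_union hL.disjoint, Finset.sum_image hL.injOn]

end

variable {V : Type} [Fintype V] [DecidableEq V] {G : SimpleGraph V} {S : Finset V} {p q : V}
  {c : ℕ → V} {l : ℕ} {x : V} {i : ℕ}

theorem push (hL : Layer G S p q c l) (C : V → ℕ) :
    FlowReach G C ((fun v => if v ∈ S then C v else 0) +
      Pi.single p (∑ j ∈ Finset.range l, C (c j) / 2)) := by
  have h : ∀ m ≤ l, FlowReach G (∑ j ∈ Finset.range m, Pi.single (c j) (C (c j)))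
      (Pi.single p (∑ j ∈ Finset.range m, C (c j) / 2)) := fun m => by
    induction m with
    | zero => intro _; exact FlowReach.of_le (by simp)
    | succ m ih =>
      intro hm
      rw [Finset.sum_range_succ, Finset.sum_range_succ, Pi.single_add]
      exact (ih (by omega)).add ((FlowReach.move (hL.adjp m (by omega)) (C (c m) / 2)).mono
        (Pi.single_le_single.2 (by omega)) le_rfl)
  refine ((FlowReach.of_le (le_refl _)).add (h l le_rfl)).mono (fun v => ?_) le_rfl
  simp only [Pi.add_apply, Finset.sum_apply, Pi.single_apply]
  by_cases hv : ∃ j < l, v = c j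
  · obtain ⟨j, hj, rfl⟩ := hv
    rw [if_neg (hL.notMem j hj), Finset.sum_eq_single j]
    · simp
    · intro b hb hbj
      rw [if_neg fun h => hbj (hL.inj j hj b (by simpa using hb) h).symm]
    · intro h
      exact absurd (Finset.mem_range.2 hj) h
  · push Not at hv
    rw [Finset.sum_eq_zero fun j hj => if_neg (hv j (by simpa using hj))]
    split_ifs <;> simp

theorem exists_slide (hL : Layer G S p q c l) (j : ℕ) (hj : j < l) (C : V → ℕ)
    (h2 : 2 ≤ C (c j)) (hodd : ∀ j' < j, C (c j') % 2 = 1) :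
    ∃ C' : V → ℕ, FlowReach G C (C' + Pi.single q 1) ∧ (∀ v ∈ S, C' v = C v) ∧
      ∑ j ∈ Finset.range l, C (c j) / 2 ≤ ∑ j ∈ Finset.range l, C' (c j) / 2 + 1 := by
  induction j generalizing C with
  | zero =>
    refine ⟨fun v => if v = c 0 then C (c 0) - 2 else C v, ?_, fun v hv => ?_, ?_⟩
    · refine ((FlowReach.of_le (le_refl _)).add (FlowReach.move (hL.adjq hj) 1)).mono
        (fun v => ?_) le_rfl
      simp only [Pi.add_apply, Pi.single_apply]
      split_ifs with h
      · subst h; omega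
      · simp
    · exact if_neg (by rintro rfl; exact hL.notMem 0 hj hv)
    · have : ∀ a ∈ Finset.range l, C (c a) / 2 =
          (if c a = c 0 then C (c 0) - 2 else C (c a)) / 2 + if a = 0 then 1 else 0 := by
        intro a ha
        by_cases h : a = 0
        · subst h; simp; omega
        · rw [if_neg fun h' => h (hL.inj a (by simpa using ha) 0 hj h'), if_neg h, add_zero]
      rw [Finset.sum_congr rfl this, Finset.sum_add_distrib, Finset.sum_ite_eq',
        if_pos (Finset.mem_range.2 hj)]
  | succ j ih =>
    have hne : c j ≠ c (j + 1) := fun h => by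
      have := hL.inj j (by omega) (j + 1) hj h; omega
    have hj1 := hodd j (by omega)
    let C₁ : V → ℕ := fun v => if v = c (j + 1) then C (c (j + 1)) - 2 else
      if v = c j then C (c j) + 1 else C v
    have hC₁ : FlowReach G C C₁ := by
      refine ((FlowReach.of_le (le_refl fun v => if v = c (j + 1) then C (c (j + 1)) - 2
        else C v)).add (FlowReach.move (hL.chain j hj) 1)).mono (fun v => ?_) (fun v => ?_)
      · simp only [Pi.add_apply, Pi.single_apply]
        split_ifs with h
        · subst h; omega
        · simp
      · simp only [Pi.add_apply, Pi.single_apply, C₁]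
        split_ifs with h h' h'
        · exact absurd (h'.symm.trans h) hne
        · simp
        · subst h'; simp
        · simp
    obtain ⟨C', h1, h3, h4⟩ := ih (by omega) C₁ (by simp [C₁, hne]; omega) fun a ha => by
      have e1 : c a ≠ c (j + 1) := fun h => by
        have := hL.inj a (by omega) (j + 1) hj h; omega
      have e2 : c a ≠ c j := fun h => by
        have := hL.inj a (by omega) j (by omega) h; omega
      simp only [C₁, e1, e2, if_false]
      exact hodd a (by omega)
    refine ⟨C', hC₁.trans h1, fun v hv => ?_, ?_⟩
    · rw [h3 v hv]
      have e1 : v ≠ c (j + 1) := fun h => hL.notMem _ hj (h ▸ hv)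
      have e2 : v ≠ c j := fun h => hL.notMem j (by omega) (h ▸ hv)
      simp [C₁, e1, e2]
    · refine le_trans (le_of_eq ?_) h4
      have : ∀ a ∈ Finset.range l, C (c a) / 2 + (if a = j then 1 else 0) =
          C₁ (c a) / 2 + if a = j + 1 then 1 else 0 := by
        intro a ha
        have ha := Finset.mem_range.1 ha
        by_cases h : a = j
        · subst h; simp [C₁, hne]; omega
        · have e2 : c a ≠ c j := fun h' => h (hL.inj a ha j (by omega) h')
          by_cases h' : a = j + 1
          · subst h'; simp [C₁]; omega
          · have e1 : c a ≠ c (j + 1) := fun h => h' (hL.inj a ha _ hj h)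
            simp [C₁, e1, e2, h, h']
      have := Finset.sum_congr rfl this
      rw [Finset.sum_add_distrib, Finset.sum_add_distrib, Finset.sum_ite_eq', Finset.sum_ite_eq',
        if_pos (Finset.mem_range.2 hj), if_pos (Finset.mem_range.2 (by omega))] at this
      omega

theorem solve (hL : Layer G S p q c l)
    (hw : ∀ k, FlowReach G (Pi.single p (k * 2 ^ i)) (Pi.single x k))
    (hS : SolvesAll G x S i) (hP : SolvesPair G x S p q i) {C : V → ℕ} {k : ℕ} (hk : 1 ≤ k)
    (h : k * 2 ^ i ≤ ∑ j ∈ Finset.range l, C (c j) / 2 ∨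
      k * 2 ^ i + S.card ≤ ∑ v ∈ S, C v + ∑ j ∈ Finset.range l, C (c j) / 2 + 2 * i ∨
      (∑ j ∈ Finset.range l, C (c j) / 2 = k * 2 ^ i - 1 ∧ S.card ≤ ∑ v ∈ S, C v + 2 * i ∧
        ∀ j, j + 1 < l → C (c j) % 2 = 1)) :
    FlowReach G C (Pi.single x k) := by
  rcases h with h | h | ⟨h, hc, hodd⟩
  · refine (hL.push C).trans ((hw k).mono (fun v => ?_) le_rfl)
    exact le_trans (Pi.single_le_single.2 h v) (by simp)
  · refine (hL.push C).trans (hS k _ ?_)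
    have e1 : ∑ v ∈ S, (if v ∈ S then C v else 0) = ∑ v ∈ S, C v :=
      Finset.sum_congr rfl fun v hv => if_pos hv
    simp only [Pi.add_apply, Finset.sum_add_distrib, Finset.sum_pi_single', if_pos hL.memp, e1]
    omega
  · have e1 : ∑ v ∈ S, (if v ∈ S then C v else 0) = ∑ v ∈ S, C v :=
      Finset.sum_congr rfl fun v hv => if_pos hv
    rcases hP k (fun v => if v ∈ S then C v else 0) hk (by omega) with h1 | ⟨hi, h1⟩
    · rw [← h] at h1
      exact (hL.push C).trans h1
    · have hK : 2 ≤ k * 2 ^ i := by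
        calc 2 = 1 * 2 ^ 1 := by norm_num
          _ ≤ k * 2 ^ i := Nat.mul_le_mul hk (Nat.pow_le_pow_right (by norm_num) hi)
      obtain ⟨j, hj, hj2⟩ : ∃ j ∈ Finset.range l, C (c j) / 2 ≠ 0 :=
        Finset.exists_ne_zero_of_sum_ne_zero (by omega)
      have hj := Finset.mem_range.1 hj
      obtain ⟨C', g1, g2, g3⟩ := hL.exists_slide j hj C (by omega)
        fun j' hj' => hodd j' (by omega)
      refine (g1.trans ((hL.push C').add (FlowReach.of_le (le_refl _)))).trans
        (h1.mono (fun v => ?_) le_rfl)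
      have g4 : (Pi.single p (k * 2 ^ i - 2) : V → ℕ) v ≤
          (Pi.single p (∑ j ∈ Finset.range l, C' (c j) / 2) : V → ℕ) v :=
        Pi.single_le_single.2 (by omega) v
      simp only [Pi.add_apply]
      have g5 : (if v ∈ S then C v else 0) = if v ∈ S then C' v else 0 := by
        split_ifs with hv
        · rw [g2 v hv]
        · rfl
      omega

theorem solvesAll (hL : Layer G S p q c l)
    (hw : ∀ k, FlowReach G (Pi.single p (k * 2 ^ i)) (Pi.single x k))
    (hS : SolvesAll G x S i) (hP : SolvesPair G x S p q i) :
    SolvesAll G x (S ∪ (Finset.range l).image c) (i + 1) := by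
  intro k C h
  rcases Nat.eq_zero_or_pos k with rfl | hk
  · exact FlowReach.of_le (by simp)
  rw [hL.card_union, hL.sum_union, Finset.sum_eq_two_mul_half_add_sum_mod_two,
    show k * 2 ^ (i + 1) = 2 * (k * 2 ^ i) by ring] at h
  have ho := Finset.sum_range_mod_two_le (fun j => C (c j)) l
  have hodd := Finset.odd_of_card_le_sum_mod_two (a := fun j => C (c j)) (m := l)
  refine hL.solve hw hS hP hk ?_
  generalize k * 2 ^ i = K at *
  by_cases h1 : K ≤ ∑ j ∈ Finset.range l, C (c j) / 2
  · exact Or.inl h1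
  by_cases h2 : K + S.card ≤ ∑ v ∈ S, C v + ∑ j ∈ Finset.range l, C (c j) / 2 + 2 * i
  · exact Or.inr (Or.inl h2)
  exact Or.inr (Or.inr ⟨by omega, by omega, fun j hj => hodd (by omega) j (by omega)⟩)

theorem solvesPair (hL : Layer G S p q c l) (hl : 2 ≤ l)
    (hw : ∀ k, FlowReach G (Pi.single p (k * 2 ^ i)) (Pi.single x k))
    (hS : SolvesAll G x S i) (hP : SolvesPair G x S p q i) {p' q' : V}
    (hpq : (p' = c (l - 1) ∧ q' = c (l - 2)) ∨ (p' = c (l - 2) ∧ q' = c (l - 1))) :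
    SolvesPair G x (S ∪ (Finset.range l).image c) p' q' (i + 1) := by
  intro k D hk h
  rw [hL.card_union, hL.sum_union] at h
  obtain ⟨m, rfl⟩ : ∃ m, l = m + 2 := ⟨l - 2, by omega⟩
  simp only [Nat.add_sub_cancel, show m + 2 - 1 = m + 1 by omega] at hpq
  have hK : 1 ≤ k * 2 ^ i := Nat.mul_pos hk (by positivity)
  have hne : c m ≠ c (m + 1) := fun h => by
    have := hL.inj m (by omega) (m + 1) (by omega) h; omega
  have hcne : ∀ j < m, c j ≠ c m ∧ c j ≠ c (m + 1) := fun j hj =>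
    ⟨fun h => by have := hL.inj j (by omega) m (by omega) h; omega,
      fun h => by have := hL.inj j (by omega) (m + 1) (by omega) h; omega⟩
  have hSne : ∀ v ∈ S, v ≠ c m ∧ v ≠ c (m + 1) := fun v hv =>
    ⟨fun h => hL.notMem m (by omega) (h ▸ hv), fun h => hL.notMem (m + 1) (by omega) (h ▸ hv)⟩
  rw [show k * 2 ^ (i + 1) = 2 * (k * 2 ^ i) by ring]
  -- both ways of distributing the pebbles over the last two vertices
  have main : ∀ a b : ℕ, a + b = 2 * (k * 2 ^ i) - 1 →
      FlowReach G (D + (Pi.single (c (m + 1)) a + Pi.single (c m) b)) (Pi.single x k) ∨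
      ((m ≤ ∑ j ∈ Finset.range m, D (c j) % 2 → (D (c m) + b) % 2 = 1 →
          (D (c (m + 1)) + a) % 2 = 1) ∧
        m + 1 ≤ ∑ j ∈ Finset.range m, D (c j) % 2 + (D (c m) + b) % 2 +
          (D (c (m + 1)) + a) % 2) := by
    intro a b hab
    set C := D + (Pi.single (c (m + 1)) a + Pi.single (c m) b) with hC
    have c1 : C (c m) = D (c m) + b := by simp [hC, hne]
    have c2 : C (c (m + 1)) = D (c (m + 1)) + a := by simp [hC, hne.symm]
    have c3 : ∀ j < m, C (c j) = D (c j) := fun j hj => by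
      simp [hC, (hcne j hj).1, (hcne j hj).2]
    have c4 : ∑ v ∈ S, C v = ∑ v ∈ S, D v := Finset.sum_congr rfl fun v hv => by
      simp [hC, (hSne v hv).1, (hSne v hv).2]
    have c5 : ∑ j ∈ Finset.range m, C (c j) = ∑ j ∈ Finset.range m, D (c j) :=
      Finset.sum_congr rfl fun j hj => c3 j (Finset.mem_range.1 hj)
    have c6 : ∑ j ∈ Finset.range m, C (c j) % 2 = ∑ j ∈ Finset.range m, D (c j) % 2 :=
      Finset.sum_congr rfl fun j hj => by rw [c3 j (Finset.mem_range.1 hj)]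
    have hs := Finset.sum_eq_two_mul_half_add_sum_mod_two (fun j => C (c j)) (m + 2)
    have ho := Finset.sum_range_mod_two_le (fun j => C (c j)) m
    have hodd := Finset.odd_of_card_le_sum_mod_two (a := fun j => C (c j)) (m := m)
    have hsol := hL.solve hw hS hP (C := C) hk
    rw [c4] at hsol
    generalize hhalf : ∑ j ∈ Finset.range (m + 2), C (c j) / 2 = half at *
    simp only [Finset.sum_range_succ] at hs h
    rw [c5, c6, c1, c2] at hs
    rw [c6] at ho hodd
    generalize k * 2 ^ i = K at *
    by_cases h1 : K ≤ half
    · exact Or.inl (hsol (Or.inl h1))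
    by_cases h2 : K + S.card ≤ ∑ v ∈ S, D v + half + 2 * i
    · exact Or.inl (hsol (Or.inr (Or.inl h2)))
    by_cases h3 : m ≤ ∑ j ∈ Finset.range m, D (c j) % 2 ∧ (D (c m) + b) % 2 = 1 ∧
        (D (c (m + 1)) + a) % 2 = 0
    · refine Or.inl (hsol (Or.inr (Or.inr ⟨by omega, by omega, fun j hj => ?_⟩)))
      rcases Nat.lt_succ_iff_lt_or_eq.1 (show j < m + 1 by omega) with hj | rfl
      · exact hodd h3.1 j hj
      · rw [c1]; exact h3.2.1
    · refine Or.inr ⟨fun h4 h5 => ?_, ?_⟩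
      · by_contra h6
        exact h3 ⟨h4, h5, by omega⟩
      · omega
  have ho := Finset.sum_range_mod_two_le (fun j => D (c j)) m
  have hi : 1 ≤ i + 1 := by omega
  generalize k * 2 ^ i = K at *
  rcases hpq with ⟨rfl, rfl⟩ | ⟨rfl, rfl⟩
  · rcases main (2 * K - 1) 0 (by omega) with h1 | h1
    · exact Or.inl (by simpa using h1)
    · rcases main (2 * K - 2) 1 (by omega) with h2 | h2
      · exact Or.inr ⟨hi, by rwa [add_assoc]⟩
      · omega
  · rcases main 0 (2 * K - 1) (by omega) with h1 | h1
    · exact Or.inl (by simpa using h1)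
    · rcases main 1 (2 * K - 2) (by omega) with h2 | h2
      · exact Or.inr ⟨hi, by rwa [add_assoc, add_comm (Pi.single (c m) _)]⟩
      · omega

end Layer

theorem FlowReach.of_single_le {V : Type} [Fintype V] [DecidableEq V] {G : SimpleGraph V}
    {C : V → ℕ} {x : V} {k : ℕ} (h : k ≤ C x) : FlowReach G C (Pi.single x k) := by
  refine FlowReach.of_le fun v => ?_
  rw [Pi.single_apply]
  split_ifs with hv
  · exact hv ▸ h
  · exact Nat.zero_le _

/-- A 2-path built up from the simplicial vertex `x` by layers; `p` and `q` are the last two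
vertices and have distance `i` from `x`. -/
inductive Layered {V : Type} [DecidableEq V] (G : SimpleGraph V) (x : V) :
    Finset V → V → V → ℕ → Prop
  | base : Layered G x {x} x x 0
  | step {S : Finset V} {p q : V} {i : ℕ} {c : ℕ → V} {l : ℕ} {p' q' : V} :
      Layered G x S p q i → Layer G S p q c l → 2 ≤ l →
      (p' = c (l - 1) ∧ q' = c (l - 2)) ∨ (p' = c (l - 2) ∧ q' = c (l - 1)) →
      Layered G x (S ∪ (Finset.range l).image c) p' q' (i + 1)

/-- `ℓ` is a distance-like labelling of `S` that does not grow along edges out of `A`. -/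
structure Levels {V : Type} (G : SimpleGraph V) (x : V) (S A : Finset V) (ℓ : V → ℕ) : Prop where
  subset : A ⊆ S
  notMem : x ∉ A
  zero : ℓ x = 0
  le_succ : ∀ u ∈ S, ∀ v ∈ S, G.Adj u v → ℓ u ≤ ℓ v + 1
  le : ∀ u ∈ A, ∀ v ∈ S, G.Adj u v → ℓ u ≤ ℓ v

theorem Levels.layer {V : Type} [DecidableEq V] {G : SimpleGraph V} {x : V} {S A : Finset V}
    {ℓ : V → ℕ} {p q : V} {c : ℕ → V} {l i m : ℕ} (h : Levels G x S A ℓ) (hx : x ∈ S)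
    (hL : Layer G S p q c l) (hp : p ∉ A) (hq : q ∉ A) (hℓp : ℓ p = i) (hℓq : ℓ q = i)
    (hm : m ≤ l) :
    ∃ (A' : Finset V) (ℓ' : V → ℕ), Levels G x (S ∪ (Finset.range l).image c) A' ℓ' ∧
      A'.card = A.card + m ∧ ∀ j < l, m ≤ j → c j ∉ A' ∧ ℓ' (c j) = i + 1 := by
  have hdisj : Disjoint A ((Finset.range m).image c) := by
    rw [Finset.disjoint_right]
    simp only [Finset.mem_image, Finset.mem_range]
    rintro _ ⟨j, hj, rfl⟩ hA
    exact hL.notMem j (by omega) (h.subset hA)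
  have hinj : Set.InjOn c (Finset.range m) := fun a ha b hb hab =>
    hL.inj a (by have := Finset.mem_range.1 ha; omega) b
      (by have := Finset.mem_range.1 hb; omega) hab
  let ℓ' : V → ℕ := fun v => if v ∈ S then ℓ v else
    if v ∈ (Finset.range m).image c then i else i + 1
  have hS : ∀ v ∈ S, ℓ' v = ℓ v := fun v hv => if_pos hv
  have hmem : ∀ j < l, (c j ∈ (Finset.range m).image c ↔ j < m) := fun j hj => by
    simp only [Finset.mem_image, Finset.mem_range]
    exact ⟨fun ⟨a, ha, hac⟩ => hL.inj a (by omega) j hj hac ▸ ha, fun hj => ⟨j, hj, rfl⟩⟩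
  have hc : ∀ j < l, ℓ' (c j) = if j < m then i else i + 1 := fun j hj => by
    simp only [ℓ', if_neg (hL.notMem j hj), hmem j hj]
  have hcS : ∀ j < l, ∀ v ∈ S, G.Adj (c j) v → v ∉ A ∧ ℓ v = i := fun j hj v hv hadj => by
    rcases hL.exact j hj v hv hadj with rfl | rfl
    · exact ⟨hp, hℓp⟩
    · exact ⟨hq, hℓq⟩
  refine ⟨A ∪ (Finset.range m).image c, ℓ', ⟨?_, ?_, ?_, ?_, ?_⟩, ?_, fun j hj hmj => ⟨?_, ?_⟩⟩
  · exact Finset.union_subset_union h.subset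
      (Finset.image_subset_image (Finset.range_subset_range.2 hm))
  · rw [Finset.mem_union, not_or]
    refine ⟨h.notMem, fun hx' => ?_⟩
    obtain ⟨j, hj, rfl⟩ := Finset.mem_image.1 hx'
    exact hL.notMem j (by have := Finset.mem_range.1 hj; omega) hx
  · rw [hS x hx, h.zero]
  · intro u hu v hv huv
    rcases Finset.mem_union.1 hu with hu | hu <;> rcases Finset.mem_union.1 hv with hv | hv
    · rw [hS u hu, hS v hv]
      exact h.le_succ u hu v hv huv
    · obtain ⟨j, hj, rfl⟩ := Finset.mem_image.1 hv
      have hj := Finset.mem_range.1 hj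
      rw [hS u hu, hc j hj, (hcS j hj u hu huv.symm).2]
      split_ifs <;> omega
    · obtain ⟨j, hj, rfl⟩ := Finset.mem_image.1 hu
      have hj := Finset.mem_range.1 hj
      rw [hS v hv, hc j hj, (hcS j hj v hv huv).2]
      split_ifs <;> omega
    · obtain ⟨j, hj, rfl⟩ := Finset.mem_image.1 hu
      obtain ⟨j', hj', rfl⟩ := Finset.mem_image.1 hv
      rw [hc j (Finset.mem_range.1 hj), hc j' (Finset.mem_range.1 hj')]
      split_ifs <;> omega
  · intro u hu v hv huv
    rcases Finset.mem_union.1 hu with hu | hu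
    · rcases Finset.mem_union.1 hv with hv | hv
      · rw [hS u (h.subset hu), hS v hv]
        exact h.le u hu v hv huv
      · obtain ⟨j, hj, rfl⟩ := Finset.mem_image.1 hv
        exact absurd hu (hcS j (Finset.mem_range.1 hj) u (h.subset hu) huv.symm).1
    · obtain ⟨j, hj, rfl⟩ := Finset.mem_image.1 hu
      have hj := Finset.mem_range.1 hj
      rw [hc j (by omega), if_pos hj]
      rcases Finset.mem_union.1 hv with hv | hv
      · rw [hS v hv, (hcS j (by omega) v hv huv).2]
      · obtain ⟨j', hj', rfl⟩ := Finset.mem_image.1 hv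
        rw [hc j' (Finset.mem_range.1 hj')]
        split_ifs <;> omega
  · rw [Finset.card_union_of_disjoint hdisj, Finset.card_image_of_injOn hinj, Finset.card_range]
  · rw [Finset.mem_union, hmem j hj, not_or]
    exact ⟨fun hA => hL.notMem j hj (h.subset hA), by omega⟩
  · rw [hc j hj, if_neg (by omega)]

namespace Layered

variable {V : Type} [DecidableEq V] {G : SimpleGraph V} {x : V} {S : Finset V} {p q : V} {i : ℕ}

theorem symm (h : Layered G x S p q i) : Layered G x S q p i := by
  cases h with
  | base => exact base
  | step h hL hl hpq => exact step h hL hl (hpq.symm.imp And.symm And.symm)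

theorem mem (h : Layered G x S p q i) : x ∈ S := by
  induction h with
  | base => exact Finset.mem_singleton_self x
  | step _ _ _ _ ih => exact Finset.mem_union_left _ ih

theorem exists_walk (h : Layered G x S p q i) : ∃ w : G.Walk p x, w.length = i := by
  induction h with
  | base => exact ⟨Walk.nil, rfl⟩
  | step h hL hl hpq ih =>
    obtain ⟨w, hw⟩ := ih
    rcases hpq with ⟨rfl, rfl⟩ | ⟨rfl, rfl⟩
    · exact ⟨Walk.cons (hL.adjp _ (by omega)) w, by simp [hw]⟩
    · exact ⟨Walk.cons (hL.adjp _ (by omega)) w, by simp [hw]⟩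

theorem exists_levels (h : Layered G x S p q i) :
    ∃ (A : Finset V) (ℓ : V → ℕ), Levels G x S A ℓ ∧ A.card + 2 * i + 1 = S.card ∧
      p ∉ A ∧ q ∉ A ∧ ℓ p = i ∧ ℓ q = i := by
  induction h with
  | base =>
    refine ⟨∅, fun _ => 0, ⟨by simp, by simp, rfl, by simp, by simp⟩, by simp, by simp, by simp,
      rfl, rfl⟩
  | @step S p q i c l p' q' h hL hl hpq ih =>
    obtain ⟨A, ℓ, h1, h2, h3, h4, h5, h6⟩ := ih
    obtain ⟨A', ℓ', g1, g2, g3⟩ := h1.layer h.mem hL h3 h4 h5 h6 (Nat.sub_le l 2)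
    have e1 := g3 (l - 1) (by omega) (by omega)
    have e2 := g3 (l - 2) (by omega) (by omega)
    refine ⟨A', ℓ', g1, by rw [hL.card_union]; omega, ?_⟩
    rcases hpq with ⟨rfl, rfl⟩ | ⟨rfl, rfl⟩
    · exact ⟨e1.1, e2.1, e1.2, e2.2⟩
    · exact ⟨e2.1, e1.1, e2.2, e1.2⟩

theorem solves [Fintype V] (h : Layered G x S p q i) :
    SolvesAll G x S i ∧ SolvesPair G x S p q i := by
  induction h with
  | base =>
    refine ⟨fun k C hC => FlowReach.of_single_le ?_, fun k C hk hC =>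
      Or.inl (FlowReach.of_single_le ?_)⟩
    · simp at hC; omega
    · simp at hC ⊢; omega
  | step h hL hl hpq ih =>
    obtain ⟨w, hw⟩ := h.exists_walk
    have hw' := fun k => hw ▸ FlowReach.walk w k
    exact ⟨hL.solvesAll hw' ih.1 ih.2, hL.solvesPair hl hw' ih.1 ih.2 hpq⟩

end Layered

/-- A 2-path with simplicial vertices `x` and `s`: the last layer ends in `s`. -/
def LayeredTo {V : Type} [DecidableEq V] (G : SimpleGraph V) (x s : V) (S : Finset V) : Prop :=
  ∃ (S₀ : Finset V) (p q : V) (i : ℕ) (c : ℕ → V) (l : ℕ), Layered G x S₀ p q i ∧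
    Layer G S₀ p q c (l + 1) ∧ s = c l ∧ S = S₀ ∪ (Finset.range (l + 1)).image c

theorem LayeredTo.pebbling {V : Type} [Fintype V] [DecidableEq V] {G : SimpleGraph V} {x s : V}
    {S : Finset V} (h : LayeredTo G x s S) :
    ∃ D : ℕ, (∃ w : G.Walk s x, w.length = D) ∧ SolvesAll G x S D ∧
      ∃ (A : Finset V) (ℓ : V → ℕ), Levels G x S A ℓ ∧ s ∉ A ∧ A.card + 2 * D = S.card ∧
        ℓ s = D := by
  obtain ⟨S₀, p, q, i, c, l, h, hL, rfl, rfl⟩ := h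
  obtain ⟨w, hw⟩ := h.exists_walk
  obtain ⟨A, ℓ, h1, h2, h3, h4, h5, h6⟩ := h.exists_levels
  obtain ⟨A', ℓ', g1, g2, g3⟩ := h1.layer h.mem hL h3 h4 h5 h6 (Nat.le_succ l)
  obtain ⟨e1, e2⟩ := g3 l (by omega) le_rfl
  exact ⟨i + 1, ⟨Walk.cons (hL.adjp l (by omega)) w, by simp [hw]⟩,
    hL.solvesAll (fun k => hw ▸ FlowReach.walk w k) h.solves.1 h.solves.2,
    A', ℓ', g1, e1, by rw [hL.card_union]; omega, e2⟩

/-- `S` spans a 2-tree in `G`. -/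
inductive TwoTreeOn {V : Type} [DecidableEq V] (G : SimpleGraph V) : Finset V → Prop
  | base {a b : V} : G.Adj a b → TwoTreeOn G {a, b}
  | ext {S : Finset V} {v a b : V} : TwoTreeOn G S → v ∉ S → a ∈ S → b ∈ S → G.Adj a b →
      (∀ u ∈ S, G.Adj v u ↔ u = a ∨ u = b) → TwoTreeOn G (insert v S)

/-- `v` is simplicial in the subgraph of `G` induced on `S`. -/
def SimplicialOn {V : Type} (G : SimpleGraph V) (S : Finset V) (v : V) : Prop :=
  ∀ a ∈ S, ∀ b ∈ S, G.Adj v a → G.Adj v b → a ≠ b → G.Adj a b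

theorem SimplicialOn.mono {V : Type} {G : SimpleGraph V} {S S' : Finset V} {v : V}
    (h : SimplicialOn G S v) (hS : S' ⊆ S) : SimplicialOn G S' v :=
  fun a ha b hb => h a (hS ha) b (hS hb)

theorem SimplicialOn.of_adj_iff {V : Type} {G : SimpleGraph V} {S : Finset V} {v a b : V}
    (hab : G.Adj a b) (h : ∀ u ∈ S, G.Adj v u ↔ u = a ∨ u = b) : SimplicialOn G S v := by
  intro u hu w hw hvu hvw huw
  rcases (h u hu).1 hvu with rfl | rfl <;> rcases (h w hw).1 hvw with rfl | rfl
  · exact absurd rfl huw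
  · exact hab
  · exact hab.symm
  · exact absurd rfl huw

theorem SimplicialOn.insert_of_not_adj {V : Type} [DecidableEq V] {G : SimpleGraph V}
    {S : Finset V} {v u : V} (h : SimplicialOn G S v) (hvu : ¬ G.Adj v u) :
    SimplicialOn G (insert u S) v := by
  intro a ha b hb hva hvb hab
  rcases Finset.mem_insert.1 ha with rfl | ha
  · exact absurd hva hvu
  rcases Finset.mem_insert.1 hb with rfl | hb
  · exact absurd hvb hvu
  exact h a ha b hb hva hvb hab

theorem Finset.eq_pair_of_card_le_two {V : Type} [DecidableEq V] {S : Finset V}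
    (hS : S.card ≤ 2) {a b : V} (ha : a ∈ S) (hb : b ∈ S) (hab : a ≠ b) : S = {a, b} :=
  (Finset.eq_of_subset_of_card_le (by simp [Finset.insert_subset_iff, ha, hb])
    (by rw [Finset.card_pair hab]; exact hS)).symm

namespace TwoTreeOn

variable {V : Type} [DecidableEq V] {G : SimpleGraph V} {S : Finset V}

theorem of_embedding {W : Type} {H : SimpleGraph W} (hH : IsTwoTree H) (f : W → V)
    (hf : Function.Injective f) (hadj : ∀ a b, G.Adj (f a) (f b) ↔ H.Adj a b)
    (hS : ∀ v, v ∈ S ↔ ∃ w, f w = v) : TwoTreeOn G S := by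
  induction hH generalizing S with
  | base H e h =>
    have : S = {f (e.symm 0), f (e.symm 1)} := by
      ext v
      rw [hS, e.symm.surjective.exists]
      simp [Fin.exists_fin_two, eq_comm]
    rw [this]
    exact base ((hadj _ _).2 ((h _ _).2 (by simp)))
  | extend H v hdeg hcl h ih =>
    obtain ⟨a, b, hab, hN⟩ := Set.ncard_eq_two.1 hdeg
    have ha : H.Adj v a := by rw [← mem_neighborSet, hN]; simp
    have hb : H.Adj v b := by rw [← mem_neighborSet, hN]; simp
    have hS' : insert (f v) (S.erase (f v)) = S := Finset.insert_erase ((hS _).2 ⟨v, rfl⟩)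
    rw [← hS']
    refine ext (a := f a) (b := f b) (ih (fun w => f w) (hf.comp Subtype.val_injective)
      (fun a b => hadj a b) fun u => ?_) (by simp) ?_ ?_ ((hadj _ _).2 (hcl ha hb hab)) ?_
    · rw [Finset.mem_erase, hS]
      constructor
      · rintro ⟨h1, w, rfl⟩
        exact ⟨⟨w, fun h => h1 (h ▸ rfl)⟩, rfl⟩
      · rintro ⟨w, rfl⟩
        exact ⟨fun h => w.2 (hf h), w, rfl⟩
    · exact Finset.mem_erase.2 ⟨fun h => ha.ne (hf h).symm, (hS _).2 ⟨a, rfl⟩⟩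
    · exact Finset.mem_erase.2 ⟨fun h => hb.ne (hf h).symm, (hS _).2 ⟨b, rfl⟩⟩
    · intro u hu
      obtain ⟨w, rfl⟩ := (hS u).1 (Finset.mem_of_mem_erase hu)
      rw [hadj, hf.eq_iff, hf.eq_iff, ← mem_neighborSet, hN]
      simp

theorem two_le_card (h : TwoTreeOn G S) : 2 ≤ S.card := by
  induction h with
  | base h => rw [Finset.card_pair h.ne]
  | ext _ hv _ _ _ _ ih => rw [Finset.card_insert_of_notMem hv]; omega

/-- A simplicial vertex of a 2-tree can be removed. -/
theorem erase (h : TwoTreeOn G S) (hS : 3 ≤ S.card) {u : V} (hu : u ∈ S)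
    (hsim : SimplicialOn G S u) :
    (∃ a b, a ∈ S ∧ b ∈ S ∧ a ≠ u ∧ b ≠ u ∧ G.Adj a b ∧ ∀ w ∈ S, G.Adj u w ↔ w = a ∨ w = b) ∧
      TwoTreeOn G (S.erase u) := by
  induction h generalizing u with
  | base h => rw [Finset.card_pair h.ne] at hS; omega
  | @ext S v a b h hv ha hb hab hN ih =>
    have hva : G.Adj v a := (hN a ha).2 (Or.inl rfl)
    have hvb : G.Adj v b := (hN b hb).2 (Or.inr rfl)
    rcases Finset.mem_insert.1 hu with rfl | huS
    · refine ⟨⟨a, b, by simp [ha], by simp [hb], hva.ne', hvb.ne', hab, fun w hw => ?_⟩, ?_⟩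
      · rcases Finset.mem_insert.1 hw with rfl | hw
        · simp [hva.ne, hvb.ne]
        · exact hN w hw
      · rwa [Finset.erase_insert hv]
    have huv : u ≠ v := fun h => hv (h ▸ huS)
    by_cases hcard : S.card ≤ 2
    · have key : ∀ a b, a ∈ S → b ∈ S → G.Adj a b → G.Adj v a → G.Adj v b → u = a →
          (∃ a b, a ∈ insert v S ∧ b ∈ insert v S ∧ a ≠ u ∧ b ≠ u ∧ G.Adj a b ∧
            ∀ w ∈ insert v S, G.Adj u w ↔ w = a ∨ w = b) ∧
          TwoTreeOn G ((insert v S).erase u) := by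
        rintro a b ha hb hab hva hvb rfl
        have hSe := Finset.eq_pair_of_card_le_two hcard ha hb hab.ne
        subst hSe
        refine ⟨⟨v, b, by simp, by simp, huv.symm, hab.ne', hvb, fun w hw => ?_⟩, ?_⟩
        · simp only [Finset.mem_insert, Finset.mem_singleton] at hw
          rcases hw with rfl | rfl | rfl
          · simp [hva.symm]
          · simp [huv, hab.ne]
          · simp [hab]
        · have : (insert v {u, b} : Finset V).erase u = {v, b} := by
            ext w
            simp only [Finset.mem_erase, Finset.mem_insert, Finset.mem_singleton]
            constructor
            · rintro ⟨h1, h2 | h2 | h2⟩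
              · exact Or.inl h2
              · exact absurd h2 h1
              · exact Or.inr h2
            · rintro (rfl | rfl)
              · exact ⟨huv.symm, Or.inl rfl⟩
              · exact ⟨hab.ne', Or.inr (Or.inr rfl)⟩
          rw [this]
          exact base hvb
      have hSe := Finset.eq_pair_of_card_le_two hcard ha hb hab.ne
      rw [hSe] at huS
      simp only [Finset.mem_insert, Finset.mem_singleton] at huS
      rcases huS with rfl | rfl
      · exact key _ _ ha hb hab hva hvb rfl
      · exact key _ _ hb ha hab.symm hvb hva rfl
    · obtain ⟨⟨a', b', ha', hb', hau, hbu, hab', hN'⟩, hT⟩ :=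
        ih (by omega) huS (hsim.mono (Finset.subset_insert _ _))
      have hnot : ¬ G.Adj v u := by
        have key : ∀ a b, b ∈ S → G.Adj a b → G.Adj v a → G.Adj v b →
            (∀ u ∈ S, G.Adj v u ↔ u = a ∨ u = b) → u = a → False := by
          rintro a b hb hab hva hvb hN rfl
          have key' : ∀ a', a' ∈ S → a' ≠ u → a' ≠ b → G.Adj u a' → False := by
            intro a' ha' h1 h2 h3
            have := hsim v (by simp) a' (by simp [ha']) hva.symm h3 (fun h => hv (h ▸ ha'))
            exact ((hN a' ha').1 this).elim h1 h2
          rcases (hN' b hb).1 hab with rfl | rfl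
          · exact key' b' hb' hbu hab'.ne' ((hN' _ hb').2 (Or.inr rfl))
          · exact key' a' ha' hau hab'.ne ((hN' _ ha').2 (Or.inl rfl))
        intro hvu
        rcases (hN u huS).1 hvu with h | h
        · exact key a b hb hab hva hvb hN h
        · exact key b a ha hab.symm hvb hva (fun w hw => by rw [hN w hw, or_comm]) h
      have hua : a ≠ u := fun h => hnot (h ▸ hva)
      have hub : b ≠ u := fun h => hnot (h ▸ hvb)
      refine ⟨⟨a', b', by simp [ha'], by simp [hb'], hau, hbu, hab', fun w hw => ?_⟩, ?_⟩
      · rcases Finset.mem_insert.1 hw with rfl | hw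
        · refine ⟨fun h => absurd h.symm hnot, ?_⟩
          rintro (rfl | rfl) <;> contradiction
        · exact hN' w hw
      · rw [Finset.erase_insert_of_ne huv.symm]
        exact ext hT (fun h => hv (Finset.mem_of_mem_erase h)) (Finset.mem_erase.2 ⟨hua, ha⟩)
          (Finset.mem_erase.2 ⟨hub, hb⟩) hab fun w hw => hN w (Finset.mem_of_mem_erase hw)

theorem exists_simplicial (h : TwoTreeOn G S) (hS : 3 ≤ S.card) {a b : V} (ha : a ∈ S)
    (hb : b ∈ S) (hab : G.Adj a b) : ∃ v ∈ S, SimplicialOn G S v ∧ v ≠ a ∧ v ≠ b := by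
  induction h generalizing a b with
  | base h => rw [Finset.card_pair h.ne] at hS; omega
  | @ext S v a₀ b₀ h hv ha₀ hb₀ hab₀ hN ih =>
    have hva : G.Adj v a₀ := (hN a₀ ha₀).2 (Or.inl rfl)
    have hvb : G.Adj v b₀ := (hN b₀ hb₀).2 (Or.inr rfl)
    have hvs : SimplicialOn G (insert v S) v :=
      (SimplicialOn.of_adj_iff hab₀ hN).insert_of_not_adj (G.loopless.irrefl v)
    have key : ∀ b ∈ S, G.Adj v b → ∃ w ∈ S, SimplicialOn G (insert v S) w ∧ w ≠ v ∧ w ≠ b := by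
      intro b hb hvb'
      by_cases hcard : S.card ≤ 2
      · have hSe := Finset.eq_pair_of_card_le_two hcard ha₀ hb₀ hab₀.ne
        have key' : ∀ a b, G.Adj a b → G.Adj v a → G.Adj v b → S = {a, b} →
            ∃ w ∈ S, SimplicialOn G (insert v S) w ∧ w ≠ v ∧ w ≠ b := by
          rintro a b hab h1 h2 rfl
          refine ⟨a, by simp, ?_, h1.ne', hab.ne⟩
          refine SimplicialOn.of_adj_iff h2 fun w hw => ?_
          simp only [Finset.mem_insert, Finset.mem_singleton] at hw
          rcases hw with rfl | rfl | rfl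
          · simp [h1.symm]
          · simp [h1.ne', hab.ne]
          · simp [hab]
        rcases (hN b hb).1 hvb' with rfl | rfl
        · exact key' b₀ b hab₀.symm hvb hva (by rw [hSe, Finset.pair_comm])
        · exact key' a₀ b hab₀ hva hvb hSe
      · obtain ⟨w, hw, h1, h2, h3⟩ := ih (by omega) ha₀ hb₀ hab₀
        have hnot : ¬ G.Adj v w := fun h => ((hN w hw).1 h).elim h2 h3
        refine ⟨w, hw, h1.insert_of_not_adj fun h => hnot h.symm, fun h => hv (h ▸ hw), ?_⟩
        rintro rfl
        exact hnot hvb'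
    by_cases hav : a = v
    · subst hav
      have hb' : b ∈ S := (Finset.mem_insert.1 hb).resolve_left hab.ne'
      obtain ⟨w, h1, h2, h3, h4⟩ := key b hb' hab
      exact ⟨w, by simp [h1], h2, h3, h4⟩
    by_cases hbv : b = v
    · subst hbv
      have ha' : a ∈ S := (Finset.mem_insert.1 ha).resolve_left hab.ne
      obtain ⟨w, h1, h2, h3, h4⟩ := key a ha' hab.symm
      exact ⟨w, by simp [h1], h2, h4, h3⟩
    exact ⟨v, by simp, hvs, fun h => hav h.symm, fun h => hbv h.symm⟩

theorem not_adj_of_simplicial (h : TwoTreeOn G S) (hS : 4 ≤ S.card) {u v : V} (hu : u ∈ S)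
    (hv : v ∈ S) (hsu : SimplicialOn G S u) (hsv : SimplicialOn G S v) : ¬ G.Adj u v := by
  intro huv
  obtain ⟨⟨a, b, ha, hb, hau, hbu, hab, hN⟩, hT⟩ := h.erase (by omega) hu hsu
  obtain ⟨⟨a', b', ha', hb', hav, hbv, hab', hN'⟩, -⟩ := hT.erase
    (by rw [Finset.card_erase_of_mem hu]; omega) (Finset.mem_erase.2 ⟨huv.ne', hv⟩)
    (hsv.mono (Finset.erase_subset _ _))
  have e1 : G.Adj u a' := hsv u hu a' (Finset.mem_of_mem_erase ha') huv.symm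
    ((hN' a' ha').2 (Or.inl rfl)) (Finset.ne_of_mem_erase ha').symm
  have e2 : G.Adj u b' := hsv u hu b' (Finset.mem_of_mem_erase hb') huv.symm
    ((hN' b' hb').2 (Or.inr rfl)) (Finset.ne_of_mem_erase hb').symm
  rw [hN _ (Finset.mem_of_mem_erase ha')] at e1
  rw [hN _ (Finset.mem_of_mem_erase hb')] at e2
  have e3 := (hN v hv).1 huv
  have := hab'.ne
  grind

end TwoTreeOn

section

variable {V : Type} [DecidableEq V] {G : SimpleGraph V}

/-- Appending a vertex to a layer. -/
theorem Layer.snoc {S : Finset V} {p q s : V} {c : ℕ → V} {l : ℕ}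
    (hL : Layer G S p q c (l + 1)) (hs : s ∉ S ∪ (Finset.range (l + 1)).image c)
    (hsc : G.Adj s (c l)) (hsp : G.Adj s p) (hS : ∀ u ∈ S, G.Adj s u → u = p) :
    Layer G S p q (Function.update c (l + 1) s) (l + 2) := by
  rw [Finset.mem_union, not_or] at hs
  have hne : ∀ j < l + 1, c j ≠ s := fun j hj h =>
    hs.2 (Finset.mem_image.2 ⟨j, Finset.mem_range.2 hj, h⟩)
  have e1 : Function.update c (l + 1) s (l + 1) = s := Function.update_self ..
  have e2 : ∀ j < l + 1, Function.update c (l + 1) s j = c j := fun j hj =>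
    Function.update_of_ne (by omega) ..
  have hcase : ∀ {P : ℕ → Prop}, (∀ j < l + 1, P j) → P (l + 1) → ∀ j < l + 2, P j :=
    fun h1 h2 j hj => (Nat.lt_succ_iff_lt_or_eq.1 hj).elim (h1 j) fun h => h ▸ h2
  refine ⟨?_, ?_, hL.memp, hL.memq, ?_, fun _ => ?_, ?_, ?_⟩
  · refine hcase (fun j hj => hcase (fun j' hj' => ?_) ?_) (hcase (fun j' hj' => ?_) ?_)
    · rw [e2 j hj, e2 j' hj']
      exact hL.inj j hj j' hj'
    · rw [e1, e2 j hj]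
      exact fun h => absurd h (hne j hj)
    · rw [e1, e2 j' hj']
      exact fun h => absurd h.symm (hne j' hj')
    · exact fun _ => rfl
  · refine hcase (fun j hj => ?_) ?_
    · rw [e2 j hj]; exact hL.notMem j hj
    · rw [e1]; exact hs.1
  · refine hcase (fun j hj => ?_) ?_
    · rw [e2 j hj]; exact hL.adjp j hj
    · rwa [e1]
  · rw [e2 0 (by omega)]; exact hL.adjq (by omega)
  · intro j hj
    rcases Nat.lt_succ_iff_lt_or_eq.1 hj with hj | hj
    · rw [e2 _ hj, e2 _ (by omega)]; exact hL.chain j hj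
    · obtain rfl : j = l := by omega
      rw [e1, e2 _ (by omega)]
      exact hsc
  · refine hcase (fun j hj => ?_) ?_
    · rw [e2 j hj]; exact hL.exact j hj
    · rw [e1]; exact fun u hu h => Or.inl (hS u hu h)

theorem Finset.image_range_update {c : ℕ → V} {s : V} {m : ℕ} :
    (Finset.range (m + 1)).image (Function.update c m s) =
      insert s ((Finset.range m).image c) := by
  rw [Finset.range_add_one, Finset.image_insert, Function.update_self]
  congr 1
  exact Finset.image_congr fun j hj => Function.update_of_ne (Finset.mem_range.1 hj).ne ..

/-- Appending a vertex to a 2-path. -/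
theorem LayeredTo.snoc {x s u v : V} {S : Finset V} (h : LayeredTo G x s S) (hv : v ∉ S)
    (hu : u ∈ S) (hsu : G.Adj s u) (hN : ∀ w ∈ S, G.Adj v w ↔ w = s ∨ w = u)
    (hs : ∀ a ∈ S, ∀ b ∈ S, a ≠ b → a ≠ u → b ≠ u → G.Adj s a → G.Adj s b → False) :
    LayeredTo G x v (insert v S) := by
  obtain ⟨S₀, p, q, i, c, l, h, hL, rfl, rfl⟩ := h
  have hc : ∀ j < l + 1, c j ∈ S₀ ∪ (Finset.range (l + 1)).image c := fun j hj =>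
    Finset.mem_union_right _ (Finset.mem_image.2 ⟨j, Finset.mem_range.2 hj, rfl⟩)
  have hS₀ : ∀ w ∈ S₀, w ∈ S₀ ∪ (Finset.range (l + 1)).image c :=
    fun w hw => Finset.mem_union_left _ hw
  have hvs : G.Adj v (c l) := (hN _ (hc l (by omega))).2 (Or.inl rfl)
  have hvu : G.Adj v u := (hN u hu).2 (Or.inr rfl)
  have key : ∀ p q, Layered G x S₀ p q i → Layer G S₀ p q c (l + 1) → u = p →
      LayeredTo G x v (insert v (S₀ ∪ (Finset.range (l + 1)).image c)) := by
    rintro _ q h hL rfl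
    refine ⟨S₀, u, q, i, _, l + 1, h, hL.snoc hv hvs hvu fun w hw hvw => ?_,
      (Function.update_self (l + 1) v c).symm, ?_⟩
    · refine ((hN w (hS₀ w hw)).1 hvw).resolve_left ?_
      rintro rfl
      exact hL.notMem l (by omega) hw
    · rw [Finset.image_range_update, Finset.union_insert]
  by_cases hup : u = p
  · exact key p q h hL hup
  rcases Nat.eq_zero_or_pos l with rfl | hl
  · refine key q p h.symm ⟨hL.inj, hL.notMem, hL.memq, hL.memp, fun j hj => ?_,
      fun _ => hL.adjp 0 (by omega), hL.chain, fun j hj w hw hjw => (hL.exact j hj w hw hjw).symm⟩ ?_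
    · obtain rfl : j = 0 := by omega
      exact hL.adjq (by omega)
    · rcases Finset.mem_union.1 hu with hu | hu
      · exact (hL.exact 0 (by omega) u hu hsu).resolve_left hup
      · obtain ⟨j, hj, rfl⟩ := Finset.mem_image.1 hu
        obtain rfl : j = 0 := by simpa using hj
        exact absurd rfl hsu.ne
  · obtain ⟨m, rfl⟩ : ∃ m, l = m + 1 := ⟨l - 1, by omega⟩
    have hum : u = c m := by
      by_contra hum
      refine hs (c m) (hc m (by omega)) p (hS₀ p hL.memp) ?_ (Ne.symm hum) (Ne.symm hup)
        (hL.chain m (by omega)) (hL.adjp (m + 1) (by omega))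
      exact fun h => hL.notMem m (by omega) (h ▸ hL.memp)
    subst hum
    refine ⟨_, c (m + 1), c m, i + 1, fun _ => v, 0,
      h.step hL (by omega) (Or.inl ⟨rfl, rfl⟩), ⟨?_, ?_, hc _ (by omega), hc _ (by omega), ?_, ?_,
        ?_, ?_⟩, rfl, ?_⟩
    · intros; omega
    · exact fun _ _ => hv
    · exact fun _ _ => hvs
    · exact fun _ => hvu
    · intros; omega
    · exact fun _ _ w hw hvw => (hN w hw).1 hvw
    · rw [zero_add, Finset.range_one, Finset.image_singleton]
      ext; simp only [Finset.mem_insert, Finset.mem_union, Finset.mem_singleton]; tauto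

theorem TwoTreeOn.adj_of_card_le_three {S : Finset V} (h : TwoTreeOn G S) (hS : S.card ≤ 3)
    {u v : V} (hu : u ∈ S) (hv : v ∈ S) (huv : u ≠ v) : G.Adj u v := by
  cases h with
  | @base a b h =>
    simp only [Finset.mem_insert, Finset.mem_singleton] at hu hv
    have := h.symm
    grind
  | @ext S w a b h hw ha hb hab hN =>
    rw [Finset.card_insert_of_notMem hw] at hS
    have hwa := (hN a ha).2 (Or.inl rfl)
    have hwb := (hN b hb).2 (Or.inr rfl)
    have h1 := hwa.symm
    have h2 := hwb.symm
    have h3 := hab.symm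
    rw [Finset.eq_pair_of_card_le_two (by omega) ha hb hab.ne] at hu hv
    simp only [Finset.mem_insert, Finset.mem_singleton] at hu hv
    grind

theorem TwoTreeOn.layeredTo {S : Finset V} (h : TwoTreeOn G S) {x s : V} (hx : x ∈ S)
    (hs : s ∈ S) (hxs : x ≠ s)
    (hsim : S.card ≤ 3 ∨ SimplicialOn G S s ∧ ∀ v ∈ S, SimplicialOn G S v → v = x ∨ v = s) :
    LayeredTo G x s S := by
  induction hn : S.card generalizing S s with
  | zero => have := h.two_le_card; omega
  | succ n ih =>
    have h2 := h.two_le_card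
    by_cases hS2 : S.card = 2
    · have hadj := h.adj_of_card_le_three (by omega) hs hx hxs.symm
      refine ⟨{x}, x, x, 0, fun _ => s, 0, Layered.base, ⟨?_, ?_, by simp, by simp, ?_, ?_,
        ?_, ?_⟩, rfl, ?_⟩
      · intros; omega
      · simpa using hxs.symm
      · exact fun _ _ => hadj
      · exact fun _ => hadj
      · intros; omega
      · simp
      · rw [Finset.eq_pair_of_card_le_two (by omega) hx hs hxs]
        rfl
    have hss : SimplicialOn G S s := by
      rcases hsim with h3 | h3
      · exact fun a ha b hb _ _ hab => h.adj_of_card_le_three h3 ha hb hab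
      · exact h3.1
    obtain ⟨⟨a, b, ha, hb, has, hbs, hab, hN⟩, hT⟩ := h.erase (by omega) hs hss
    have hcard := Finset.card_erase_of_mem hs
    have ha' := Finset.mem_erase.2 ⟨has, ha⟩
    have hb' := Finset.mem_erase.2 ⟨hbs, hb⟩
    have hx' := Finset.mem_erase.2 ⟨hxs, hx⟩
    have key : ∀ a b, a ∈ S.erase s → b ∈ S.erase s → G.Adj a b →
        (∀ w ∈ S, G.Adj s w ↔ w = a ∨ w = b) → x ≠ a →
        ((S.erase s).card ≤ 3 ∨ SimplicialOn G (S.erase s) a ∧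
          ∀ v ∈ S.erase s, SimplicialOn G (S.erase s) v → v = x ∨ v = a) →
        LayeredTo G x s S := by
      intro a b ha hb hab hN hxa hsim'
      have := (ih hT hx' ha hxa hsim' (by omega)).snoc (v := s) (by simp) hb hab
        (fun w hw => hN w (Finset.mem_of_mem_erase hw)) ?_
      · rwa [Finset.insert_erase hs] at this
      · intro a' ha' b' hb' hne ha'b hb'b haa' hab'
        by_cases h3 : (S.erase s).card ≤ 3
        · have h4 : ({a, b, a', b'} : Finset V).card ≤ (S.erase s).card :=
            Finset.card_le_card (by simp [Finset.insert_subset_iff, *])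
          rw [Finset.card_insert_of_notMem (by simp [hab.ne, haa'.ne, hab'.ne]),
            Finset.card_insert_of_notMem (by simp [ha'b.symm, hb'b.symm]),
            Finset.card_pair hne] at h4
          omega
        · obtain ⟨⟨a₁, b₁, -, -, -, -, -, hN'⟩, -⟩ :=
            hT.erase (by omega) ha (hsim'.resolve_left h3).1
          have e1 := (hN' b hb).1 hab
          have e2 := (hN' a' ha').1 haa'
          have e3 := (hN' b' hb').1 hab'
          grind
    have hN' : ∀ w ∈ S, G.Adj s w ↔ w = b ∨ w = a := fun w hw => by rw [hN w hw, or_comm]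
    by_cases h3 : (S.erase s).card ≤ 3
    · by_cases hxa : x = a
      · exact key b a hb' ha' hab.symm hN' (fun h => hab.ne (hxa.symm.trans h)) (Or.inl h3)
      · exact key a b ha' hb' hab hN hxa (Or.inl h3)
    have hsim := (hsim.resolve_left (by omega)).2
    have hold : ∀ v ∈ S.erase s, SimplicialOn G (S.erase s) v → v = x ∨ v = a ∨ v = b := by
      intro v hv hvs
      by_contra! hcon
      have hnot : ¬ G.Adj v s := fun h =>
        ((hN v (Finset.mem_of_mem_erase hv)).1 h.symm).elim hcon.2.1 hcon.2.2
      have := hvs.insert_of_not_adj hnot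
      rw [Finset.insert_erase hs] at this
      rcases hsim v (Finset.mem_of_mem_erase hv) this with h | h
      · exact hcon.1 h
      · exact Finset.ne_of_mem_erase hv h
    obtain ⟨w, hw, hws, hwa, hwb⟩ := hT.exists_simplicial (by omega) ha' hb' hab
    obtain rfl : w = x := by
      rcases hold w hw hws with h | h | h
      · exact h
      · exact absurd h hwa
      · exact absurd h hwb
    obtain ⟨⟨a₁, b₁, ha₁, hb₁, -, -, -, hN₁⟩, -⟩ := hT.erase (by omega) hw hws
    obtain ⟨s', hs', hss', hsw, -⟩ := hT.exists_simplicial (by omega) hw ha₁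
      ((hN₁ a₁ ha₁).2 (Or.inl rfl))
    have hone : ¬ (SimplicialOn G (S.erase s) a ∧ SimplicialOn G (S.erase s) b) := fun h =>
      hT.not_adj_of_simplicial (by omega) ha' hb' h.1 h.2 hab
    rcases (hold s' hs' hss').resolve_left hsw with rfl | rfl
    · refine key s' b ha' hb' hab hN hwa (Or.inr ⟨hss', fun v hv hvs => ?_⟩)
      rcases hold v hv hvs with h | h | rfl
      · exact Or.inl h
      · exact Or.inr h
      · exact absurd ⟨hss', hvs⟩ hone
    · refine key s' a hb' ha' hab.symm hN' hwb (Or.inr ⟨hss', fun v hv hvs => ?_⟩)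
      rcases hold v hv hvs with h | rfl | h
      · exact Or.inl h
      · exact absurd ⟨hvs, hss'⟩ hone
      · exact Or.inr h

end

theorem FlowReach.of_walk_support {V : Type} [Fintype V] [DecidableEq V] {G K : SimpleGraph V}
    {x s : V} (p : G.Walk x s) (hp : ∀ a b, s(a, b) ∈ p.edges → K.Adj a b) {C : V → ℕ} {k : ℕ}
    (hC : ∀ v, v ∉ p.support → C v = 0) (hk : k * 2 ^ p.length ≤ ∑ v, C v) :
    FlowReach K C (Pi.single x k) := by
  induction p generalizing C k with
  | nil =>
    refine FlowReach.of_single_le ?_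
    rw [Finset.sum_eq_single_of_mem _ (Finset.mem_univ _)
      fun v _ hv => hC v (by simpa using hv)] at hk
    simpa using hk
  | @cons x y s h p ih =>
    by_cases hx : k ≤ C x
    · exact FlowReach.of_single_le hx
    have hsplit : Function.update C x 0 + Pi.single x (C x) = C := by
      ext v
      by_cases hv : v = x
      · subst hv; simp
      · simp [hv]
    have hsum : ∑ v, Function.update C x 0 v + C x = ∑ v, C v := by
      conv_rhs => rw [← hsplit]
      simp [Finset.sum_add_distrib]
    have h1 := ih (fun a b hab => hp a b (by simp [hab])) (C := Function.update C x 0)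
      (k := 2 * (k - C x)) (fun v hv => ?_) ?_
    · have h2 := (h1.trans (FlowReach.move (hp y x (by simp [Sym2.eq_swap])) (k - C x))).add
        (FlowReach.of_le (le_refl (Pi.single x (C x))))
      rwa [hsplit, ← Pi.single_add, Nat.sub_add_cancel (by omega)] at h2
    · by_cases hvx : v = x
      · subst hvx; simp
      · rw [Function.update_of_ne hvx]
        exact hC v (by simp [hvx, hv])
    · have h3 : C x ≤ C x * 2 ^ (p.length + 1) := Nat.le_mul_of_pos_right _ (by positivity)
      have h4 : (k - C x) * 2 ^ (p.length + 1) + C x * 2 ^ (p.length + 1) =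
          k * 2 ^ (p.length + 1) := by
        rw [← add_mul, Nat.sub_add_cancel (by omega)]
      rw [Walk.length_cons] at hk
      rw [pow_succ] at *
      linarith

theorem SimpleGraph.Walk.exists_induce {V : Type} {G : SimpleGraph V} {B : Set V} {u v : V}
    (p : (G.restr B).Walk u v) (hu : u ∈ B) (hv : v ∈ B) :
    ∃ q : (G.induce B).Walk ⟨u, hu⟩ ⟨v, hv⟩, q.length = p.length := by
  induction p with
  | nil => exact ⟨Walk.nil, rfl⟩
  | cons h p ih =>
    obtain ⟨q, hq⟩ := ih h.2.2 hv
    exact ⟨Walk.cons (by exact h.1) q, congrArg (· + 1) hq⟩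

theorem simplicialOn_restr_iff {V : Type} {G : SimpleGraph V} {S : Finset V} {B : Set V}
    (hS : ∀ v, v ∈ S ↔ v ∈ B) (v : B) :
    SimplicialOn (G.restr B) S v ↔ IsSimplicial (G.induce B) v := by
  constructor
  · intro h a ha b hb hab
    exact (h a ((hS _).2 a.2) b ((hS _).2 b.2) ⟨ha, v.2, a.2⟩ ⟨hb, v.2, b.2⟩
      fun h => hab (Subtype.ext h)).1
  · intro h a ha b hb hva hvb hab
    have ha := (hS a).1 ha
    have hb := (hS b).1 hb
    exact ⟨h (x := ⟨a, ha⟩) hva.1 (y := ⟨b, hb⟩) hvb.1 (by simpa using hab), ha, hb⟩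

theorem IsTwoPath.simplicial_iff {V : Type} [Finite V] {G : SimpleGraph V}
    (hG : IsTwoPath G) {x s : V} (hxs : x ≠ s) (hx : IsSimplicial G x) (hs : IsSimplicial G s)
    (v : V) : IsSimplicial G v ↔ v = x ∨ v = s := by
  have h : {x, s} = {v | IsSimplicial G v} := Set.eq_of_subset_of_ncard_le
    (by rintro _ (rfl | rfl) <;> assumption) (by rw [hG.2, Set.ncard_pair hxs])
  exact (Set.ext_iff.1 h v).symm

theorem IsTwoTree.twoTreeOn_restr {V : Type} [DecidableEq V] {G : SimpleGraph V} {B : Set V}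
    (hB : IsTwoTree (G.induce B)) {S : Finset V} (hS : ∀ v, v ∈ S ↔ v ∈ B) :
    TwoTreeOn (G.restr B) S :=
  TwoTreeOn.of_embedding hB Subtype.val Subtype.val_injective
    (fun a b => ⟨fun h => h.1, fun h => ⟨h, a.2, b.2⟩⟩) fun v => by simp [hS]

section

variable {V : Type} [Fintype V] [DecidableEq V] {G : SimpleGraph V} {B : Set V}

theorem IsTwoPath.layeredTo_restr (hB : IsTwoPath (G.induce B)) {x s : B} (hxs : x ≠ s)
    (hx : IsSimplicial (G.induce B) x) (hs : IsSimplicial (G.induce B) s) {S : Finset V}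
    (hS : ∀ v, v ∈ S ↔ v ∈ B) : LayeredTo (G.restr B) x s S := by
  refine (hB.1.twoTreeOn_restr hS).layeredTo ((hS _).2 x.2) ((hS _).2 s.2)
    (fun h => hxs (Subtype.ext h)) (Or.inr ⟨(simplicialOn_restr_iff hS s).2 hs, fun v hv hvs => ?_⟩)
  have hv := (hS v).1 hv
  have := (hB.simplicial_iff hxs hx hs ⟨v, hv⟩).1 ((simplicialOn_restr_iff hS ⟨v, hv⟩).1 hvs)
  exact this.imp (congrArg Subtype.val) (congrArg Subtype.val)

/-- A 2-path `B` and its spine can be exchanged at the cost of `|B| - 2 d` pebbles. -/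
theorem IsTwoPath.endTransfer (hB : IsTwoPath (G.induce B)) {x s : B} (hxs : x ≠ s)
    (hx : IsSimplicial (G.induce B) x) (hs : IsSimplicial (G.induce B) s)
    (p : (G.induce B).Walk x s) (hlen : p.length = (G.induce B).dist x s) {T : SimpleGraph V}
    (hTG : T ≤ G) (hT : ∀ a b : B, T.Adj a b ↔ s(a, b) ∈ p.edges) :
    EndTransfer (G.restr B) B (T.restr B) (T.restr B).support x s
        (-((B.ncard : ℤ) - 2 * p.length)) ∧
      EndTransfer (T.restr B) (T.restr B).support (G.restr B) B x s
        ((B.ncard : ℤ) - 2 * p.length) := by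
  classical
  set S := B.toFinset with hSdef
  have hS : ∀ v, v ∈ S ↔ v ∈ B := fun v => Set.mem_toFinset
  have hcard : B.ncard = S.card := Set.ncard_eq_toFinset_card' B
  have hxs' : (x : V) ≠ s := fun h => hxs (Subtype.ext h)
  obtain ⟨D, ⟨w, hw⟩, hsol, A, ℓ, hℓ, hsA, hA, hℓs⟩ :=
    (hB.layeredTo_restr hxs hx hs hS).pebbling
  have hTG' : T.restr B ≤ G.restr B := fun a b h => ⟨hTG h.1, h.2⟩
  let φ : G.induce B →g G := (Embedding.induce B).toHom
  have hφ : ∀ a, φ a = a := fun a => rfl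
  have hpe : ∀ a b, s(a, b) ∈ (p.map φ).edges → (T.restr B).Adj a b := by
    intro a b hab
    rw [Walk.edges_map] at hab
    obtain ⟨e, he, heq⟩ := List.mem_map.1 hab
    induction e with
    | _ u v =>
      have hT' : (T.restr B).Adj u v := ⟨(hT u v).2 he, u.2, v.2⟩
      rw [Sym2.map_mk, Sym2.eq_iff] at heq
      rcases heq with ⟨rfl, rfl⟩ | ⟨rfl, rfl⟩
      · exact hT'
      · exact hT'.symm
  have hsupp : ∀ v ∈ (T.restr B).support, v ∈ (p.map φ).support := by
    rintro v ⟨u, huv, hv, hu⟩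
    rw [Walk.support_map, List.mem_map]
    exact ⟨⟨v, hv⟩, p.fst_mem_support_of_mem_edges ((hT ⟨v, hv⟩ ⟨u, hu⟩).1 huv), rfl⟩
  have hsY : (s : V) ∈ (T.restr B).support := by
    have hnil : ¬ p.Nil := fun h => hxs h.eq
    obtain ⟨e, he, hse⟩ := (Walk.mem_support_iff_exists_mem_edges_of_not_nil hnil).1
      p.end_mem_support
    obtain ⟨u, rfl⟩ := Sym2.mem_iff_exists.1 hse
    exact ⟨u, (hT s u).2 he, s.2, u.2⟩
  -- the weight bound
  have hlow : ∀ m k, FlowReach (G.restr B)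
      (fun v => (if v = s then m else 0) + if v ∈ A then 1 else 0) (Pi.single (x : V) k) →
      k * 2 ^ D ≤ m := by
    intro m k h
    have := FlowReach.weight (y := fun v => 2 ^ (D - ℓ v)) hℓ.notMem hsA (fun u v huv _ => ?_)
      (fun u v huv hu => ?_) h
    · simpa [hℓ.zero, hℓs] using this
    · have := hℓ.le_succ u ((hS u).2 huv.2.1) v ((hS v).2 huv.2.2) huv
      rw [← pow_succ']
      exact Nat.pow_le_pow_right (by norm_num) (by omega)
    · have := hℓ.le u hu v ((hS v).2 huv.2.2) huv
      exact Nat.pow_le_pow_right (by norm_num) (by omega)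
  have hD : p.length = D := by
    apply le_antisymm
    · obtain ⟨q, hq⟩ := w.exists_induce s.2 x.2
      rw [hlen, dist_comm, ← hw, ← hq]
      exact dist_le q
    · have h1 := hlow (1 * 2 ^ p.length) 1 ((FlowReach.of_walk_support (p.map φ)
        (fun a b h => hTG' (hpe a b h)) (C := Pi.single (s : V) (1 * 2 ^ p.length))
        (fun v hv => ?_) (by simp)).mono (fun v => ?_) le_rfl)
      · exact (Nat.pow_le_pow_iff_right (a := 2) (by norm_num)).1 (by simpa using h1)
      · exact Pi.single_eq_of_ne (fun h => hv (by rw [h]; exact (p.map φ).end_mem_support)) _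
      · simp [Pi.single_apply]
  have hAx : ∀ k, ∑ v, ((if v = (s : V) then k else 0) + if v ∈ A then 1 else 0) = k + A.card := by
    intro k
    simp [Finset.sum_add_distrib]
  constructor
  · intro C hC hCx
    obtain ⟨k, hk⟩ := FlowReach.exists_max (G.restr B) C x
    have hsumS : ∑ v ∈ S, C v = ∑ v, C v :=
      Finset.sum_subset (Finset.subset_univ _) fun v _ hv => hC v (by rwa [hS] at hv)
    have h1 : ∑ v, C v + 2 * D < (k + 1) * 2 ^ D + S.card := by
      by_contra h
      have := (hk (k + 1)).1 (hsol (k + 1) C (by omega))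
      omega
    have h2 : C s < (k + 1) * 2 ^ D := by
      by_contra h
      have hwalk : FlowReach (G.restr B) (Pi.single (s : V) ((k + 1) * 2 ^ D))
          (Pi.single (x : V) (k + 1)) := hw ▸ FlowReach.walk w (k + 1)
      refine absurd ((hk (k + 1)).1 (hwalk.mono (fun v => ?_) le_rfl)) ?_
      · rw [Pi.single_apply]
        split_ifs with hv
        · rw [hv]; exact not_lt.1 h
        · exact Nat.zero_le _
      · omega
    refine ⟨Pi.single (s : V) ((k + 1) * 2 ^ D - 1), fun v hv => ?_, ?_, ?_, ?_, fun t ht => ?_⟩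
    · exact Pi.single_eq_of_ne (fun h => hv (by rw [h]; exact hsY)) _
    · exact Pi.single_eq_of_ne hxs' _
    · rw [Pi.single_eq_same]; omega
    · rw [Finset.sum_pi_single', if_pos (Finset.mem_univ _), hcard, hD]
      omega
    · rw [hk]
      have := hlow ((k + 1) * 2 ^ D - 1) t ((ht.mono_graph hTG').mono (fun v => ?_) le_rfl)
      · have h3 : t * 2 ^ D < (k + 1) * 2 ^ D := by omega
        have := Nat.lt_of_mul_lt_mul_right h3
        omega
      · simp [Pi.single_apply]
  · intro C hC hCx
    obtain ⟨k, hk⟩ := FlowReach.exists_max (T.restr B) C x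
    have h1 : ∑ v, C v < (k + 1) * 2 ^ D := by
      by_contra h
      have := (hk (k + 1)).1 (FlowReach.of_walk_support (p.map φ) hpe
        (fun v hv => hC v fun h => hv (hsupp v h)) (by rw [Walk.length_map, hD]; omega))
      omega
    refine ⟨fun v => (if v = (s : V) then (k + 1) * 2 ^ D - 1 else 0) + if v ∈ A then 1 else 0,
      fun v hv => ?_, ?_, ?_, ?_, fun t ht => ?_⟩
    · have e1 : v ≠ s := fun h => hv (h ▸ s.2)
      have e2 : v ∉ A := fun h => hv ((hS v).1 (hℓ.subset h))
      simp [e1, e2]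
    · simp [hxs', hℓ.notMem]
    · have := Finset.single_le_sum (fun v _ => Nat.zero_le (C v)) (Finset.mem_univ (s : V))
      simp only [if_true]
      omega
    · rw [hAx, hcard, hD]
      omega
    · rw [hk]
      have h3 := hlow _ t ht
      have h4 : t * 2 ^ D < (k + 1) * 2 ^ D := by omega
      have := Nat.lt_of_mul_lt_mul_right h4
      omega

end

/-- Rerouting a path through a new vertex instead of an edge. -/
theorem SimpleGraph.Walk.IsPath.exists_reroute {V : Type} {G : SimpleGraph V}
    {a b a₀ b₀ v : V} {p : G.Walk a b} (hp : p.IsPath)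
    (hv : v ∉ p.support) (hva : G.Adj v a₀) (hvb : G.Adj v b₀) (he : s(a₀, b₀) ∈ p.edges) :
    ∃ p' : G.Walk a b, p'.IsPath ∧ (∀ w ∈ p'.support, w = v ∨ w ∈ p.support) ∧
      s(v, a₀) ∈ p'.edges ∧ s(v, b₀) ∈ p'.edges ∧ ∀ e ∈ p'.edges, v ∈ e ∨ e ∈ p.edges := by
  induction p with
  | nil => simp at he
  | @cons u w b h p ih =>
    rw [Walk.cons_isPath_iff] at hp
    rw [Walk.support_cons, List.mem_cons, not_or] at hv
    rw [Walk.edges_cons, List.mem_cons] at he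
    by_cases he' : s(a₀, b₀) = s(u, w)
    · have h1 : G.Adj u v ∧ G.Adj v w := by
        rcases Sym2.eq_iff.1 he' with ⟨rfl, rfl⟩ | ⟨rfl, rfl⟩
        · exact ⟨hva.symm, hvb⟩
        · exact ⟨hvb.symm, hva⟩
      refine ⟨Walk.cons h1.1 (Walk.cons h1.2 p), ?_, ?_, ?_, ?_, ?_⟩
      · simp only [Walk.cons_isPath_iff, Walk.support_cons, List.mem_cons, not_or]
        exact ⟨⟨hp.1, hv.2⟩, Ne.symm hv.1, hp.2⟩
      · simp only [Walk.support_cons, List.mem_cons]; tauto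
      · rcases Sym2.eq_iff.1 he' with ⟨rfl, rfl⟩ | ⟨rfl, rfl⟩ <;> simp [Sym2.eq_swap]
      · rcases Sym2.eq_iff.1 he' with ⟨rfl, rfl⟩ | ⟨rfl, rfl⟩ <;> simp [Sym2.eq_swap]
      · simp only [Walk.edges_cons, List.mem_cons]
        rintro e (rfl | rfl | he)
        · simp
        · simp
        · exact Or.inr (Or.inr he)
    · obtain ⟨p', h1, h2, h3, h4, h5⟩ := ih hp.1 hv.2 (he.resolve_left he')
      refine ⟨Walk.cons h p', ?_, ?_, ?_, ?_, ?_⟩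
      · rw [Walk.cons_isPath_iff]
        exact ⟨h1, fun hu => (h2 u hu).elim (Ne.symm hv.1) hp.2⟩
      · simp only [Walk.support_cons, List.mem_cons]
        rintro x (rfl | hx)
        · simp
        · exact (h2 x hx).imp_right Or.inr
      · simp [h3]
      · simp [h4]
      · simp only [Walk.edges_cons, List.mem_cons]
        rintro e (rfl | he)
        · simp
        · exact (h5 e he).imp_right Or.inr

section

variable {V : Type} [DecidableEq V] {G : SimpleGraph V}

theorem TwoTreeOn.reachable {S : Finset V} (h : TwoTreeOn G S) (z : V) {u w : V} (hu : u ∈ S)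
    (hw : w ∈ S) (huz : u ≠ z) (hwz : w ≠ z) :
    (G.restr {y | y ∈ S ∧ y ≠ z}).Reachable u w := by
  induction h generalizing u w with
  | @base a b h =>
    by_cases huw : u = w
    · subst huw; rfl
    · refine Adj.reachable ⟨?_, ⟨hu, huz⟩, ⟨hw, hwz⟩⟩
      have := h.symm
      simp only [Finset.mem_insert, Finset.mem_singleton] at hu hw
      grind
  | @ext S v a b h hv ha hb hab hN ih =>
    have hmono : G.restr {y | y ∈ S ∧ y ≠ z} ≤ G.restr {y | y ∈ insert v S ∧ y ≠ z} :=
      G.restr_mono fun y hy => ⟨Finset.mem_insert_of_mem hy.1, hy.2⟩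
    obtain ⟨n, hn, hnz, hvn⟩ : ∃ n ∈ S, n ≠ z ∧ G.Adj v n := by
      by_cases haz : a = z
      · exact ⟨b, hb, fun h => hab.ne (haz.trans h.symm), (hN b hb).2 (Or.inr rfl)⟩
      · exact ⟨a, ha, haz, (hN a ha).2 (Or.inl rfl)⟩
    have key : ∀ u ∈ insert v S, u ≠ z →
        (G.restr {y | y ∈ insert v S ∧ y ≠ z}).Reachable u n := by
      intro u hu huz
      rcases Finset.mem_insert.1 hu with rfl | hu'
      · exact Adj.reachable ⟨hvn, ⟨hu, huz⟩, ⟨Finset.mem_insert_of_mem hn, hnz⟩⟩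
      · exact (ih hu' hn huz hnz).mono hmono
    exact (key u hu huz).trans (key w hw hwz).symm

theorem TwoTreeOn.exists_path {S : Finset V} (h : TwoTreeOn G S) {a b : V} (ha : a ∈ S)
    (hb : b ∈ S) (hab : G.Adj a b) {e : Sym2 V} (he : e ∈ G.edgeSet) (heS : ∀ w ∈ e, w ∈ S) :
    e = s(a, b) ∨ ∃ p : G.Walk a b, p.IsPath ∧ (∀ w ∈ p.support, w ∈ S) ∧ e ∈ p.edges ∧
      s(a, b) ∉ p.edges := by
  induction h generalizing a b e with
  | @base c d h =>
    left
    induction e with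
    | _ u w =>
      have hu := heS u (by simp)
      have hw := heS w (by simp)
      have h1 := G.ne_of_adj he
      have h2 := hab.ne
      simp only [Finset.mem_insert, Finset.mem_singleton] at ha hb hu hw
      rw [Sym2.eq_iff]
      grind
  | @ext S v a₀ b₀ h hv ha₀ hb₀ hab₀ hN ih =>
    have hva : G.Adj v a₀ := (hN a₀ ha₀).2 (Or.inl rfl)
    have hvb : G.Adj v b₀ := (hN b₀ hb₀).2 (Or.inr rfl)
    have hvS : ∀ w ∈ S, w ≠ v := fun w hw h => hv (h ▸ hw)
    have hev : v ∈ e → e = s(v, a₀) ∨ e = s(v, b₀) := by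
      intro hve
      obtain ⟨w, rfl⟩ := Sym2.mem_iff_exists.1 hve
      have hvw : G.Adj v w := he
      have hw : w ∈ S := (Finset.mem_insert.1 (heS w (by simp))).resolve_left hvw.ne'
      exact ((hN w hw).1 hvw).imp (fun h => by rw [h]) fun h => by rw [h]
    have heS' : v ∉ e → ∀ w ∈ e, w ∈ S := fun hve w hw =>
      (Finset.mem_insert.1 (heS w hw)).resolve_left fun h => hve (h ▸ hw)
    -- a path that starts with the new vertex
    have hfirst : ∀ a₀ b₀ : V, a₀ ∈ S → b₀ ∈ S → G.Adj b₀ a₀ → G.Adj v b₀ → 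
        (v ∈ e → e = s(v, a₀) ∨ e = s(v, b₀)) →
        e = s(v, a₀) ∨ ∃ p : G.Walk v a₀, p.IsPath ∧ (∀ w ∈ p.support, w ∈ insert v S) ∧
          e ∈ p.edges ∧ s(v, a₀) ∉ p.edges := by
      intro a₀ b₀ ha₀ hb₀ hab₀ hvb hev
      have hcons : ∀ q : G.Walk b₀ a₀, q.IsPath → (∀ w ∈ q.support, w ∈ S) →
          (e = s(v, b₀) ∨ e ∈ q.edges) →
          ∃ p : G.Walk v a₀, p.IsPath ∧ (∀ w ∈ p.support, w ∈ insert v S) ∧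
          e ∈ p.edges ∧ s(v, a₀) ∉ p.edges := by
        intro q hq hqS heq
        refine ⟨Walk.cons hvb q, ?_, ?_, ?_, ?_⟩
        · rw [Walk.cons_isPath_iff]
          exact ⟨hq, fun h => hv (hqS v h)⟩
        · simp only [Walk.support_cons, List.mem_cons, Finset.mem_insert]
          exact fun w hw => hw.imp_right (hqS w)
        · simpa using heq
        · rw [Walk.edges_cons, List.mem_cons, not_or]
          refine ⟨fun h => ?_, fun h => hv (hqS v (q.fst_mem_support_of_mem_edges h))⟩
          have := hab₀.ne
          rw [Sym2.eq_iff] at h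
          grind
      have hsingle : ∀ w ∈ (Walk.cons hab₀ Walk.nil : G.Walk b₀ a₀).support, w ∈ S := by
        simp [ha₀, hb₀]
      have hpath : (Walk.cons hab₀ Walk.nil : G.Walk b₀ a₀).IsPath := by
        simp [Walk.cons_isPath_iff, hab₀.ne]
      by_cases hve : v ∈ e
      · rcases hev hve with h | h
        · exact Or.inl h
        · exact Or.inr (hcons _ hpath hsingle (Or.inl h))
      · right
        rcases ih hb₀ ha₀ hab₀ he (heS' hve) with h | ⟨q, h1, h2, h3, -⟩
        · exact hcons _ hpath hsingle (Or.inr (by simp [h]))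
        · exact hcons q h1 h2 (Or.inr h3)
    have hstart : ∀ w ∈ S, G.Adj v w → e = s(v, w) ∨ ∃ p : G.Walk v w, p.IsPath ∧
        (∀ u ∈ p.support, u ∈ insert v S) ∧ e ∈ p.edges ∧ s(v, w) ∉ p.edges := by
      intro w hw hvw
      rcases (hN w hw).1 hvw with rfl | rfl
      · exact hfirst _ b₀ hw hb₀ hab₀.symm hvb hev
      · exact hfirst _ a₀ hw ha₀ hab₀ hva fun h => (hev h).symm
    by_cases hav : a = v
    · subst hav
      exact hstart b ((Finset.mem_insert.1 hb).resolve_left hab.ne') hab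
    by_cases hbv : b = v
    · subst hbv
      rw [Sym2.eq_swap]
      rcases hstart a ((Finset.mem_insert.1 ha).resolve_left hab.ne) hab.symm with
        h | ⟨p, h1, h2, h3, h4⟩
      · exact Or.inl h
      · exact Or.inr ⟨p.reverse, h1.reverse, by simpa using h2, by simpa using h3, by simpa using h4⟩
    have haS := (Finset.mem_insert.1 ha).resolve_left hav
    have hbS := (Finset.mem_insert.1 hb).resolve_left hbv
    by_cases hve : v ∈ e
    · right
      have hcase := hev hve
      have hnew : ∃ p : G.Walk a b, p.IsPath ∧ (∀ w ∈ p.support, w ∈ insert v S) ∧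
          s(v, a₀) ∈ p.edges ∧ s(v, b₀) ∈ p.edges ∧ s(a, b) ∉ p.edges := by
        have hfin : ∀ p : G.Walk a b, p.IsPath → (∀ w ∈ p.support, w ∈ S) →
            s(a₀, b₀) ∈ p.edges → (s(a, b) ∉ p.edges ∨ ∀ p' : G.Walk a b, p'.IsPath →
              s(v, a₀) ∈ p'.edges → s(a, b) ∉ p'.edges) →
            ∃ p : G.Walk a b, p.IsPath ∧ (∀ w ∈ p.support, w ∈ insert v S) ∧
              s(v, a₀) ∈ p.edges ∧ s(v, b₀) ∈ p.edges ∧ s(a, b) ∉ p.edges := by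
          intro p hp hpS hpe hab'
          obtain ⟨p', h1, h2, h3, h4, h5⟩ := hp.exists_reroute (fun h => hv (hpS v h)) hva hvb hpe
          refine ⟨p', h1, fun w hw => Finset.mem_insert.2 ((h2 w hw).imp_right (hpS w)), h3, h4, ?_⟩
          rcases hab' with hab' | hab'
          · intro h
            rcases h5 _ h with h | h
            · rw [Sym2.mem_iff] at h
              exact h.elim (Ne.symm hav) (Ne.symm hbv)
            · exact hab' h
          · exact hab' p' h1 h3
        rcases ih haS hbS hab (e := s(a₀, b₀)) hab₀ (by simp [ha₀, hb₀]) with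
          h | ⟨p, h1, h2, h3, h4⟩
        · refine hfin (Walk.cons hab Walk.nil) (by simp [Walk.cons_isPath_iff, hab.ne])
            (by simp [haS, hbS]) (by simp [h]) (Or.inr fun p' hp' h1 h2 => ?_)
          cases p' with
          | nil => simp at h2
          | @cons _ w _ h' p' =>
            rw [Walk.cons_isPath_iff] at hp'
            rw [Walk.edges_cons, List.mem_cons] at h1 h2
            have hw : b = w := by
              rcases h2 with h2 | h2
              · rw [Sym2.eq_iff] at h2
                have := hab.ne
                grind
              · exact absurd (p'.fst_mem_support_of_mem_edges h2) hp'.2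
            subst hw
            rw [Walk.eq_nil_iff_nil.2 (Walk.isPath_iff_nil.1 hp'.1)] at h1
            rcases h1 with h1 | h1
            · rw [Sym2.eq_iff] at h1
              grind
            · simp at h1
        · exact hfin p h1 h2 h3 (Or.inl h4)
      obtain ⟨p, h1, h2, h3, h4, h5⟩ := hnew
      exact ⟨p, h1, h2, by rcases hcase with rfl | rfl <;> assumption, h5⟩
    · rcases ih haS hbS hab he (heS' hve) with h | ⟨p, h1, h2, h3, h4⟩
      · exact Or.inl h
      · exact Or.inr ⟨p, h1, fun w hw => Finset.mem_insert_of_mem (h2 w hw), h3, h4⟩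

theorem TwoTreeOn.sameBlockEdge {S : Finset V} (h : TwoTreeOn G S) {e f : Sym2 V}
    (he : e ∈ G.edgeSet) (hf : f ∈ G.edgeSet) (heS : ∀ w ∈ e, w ∈ S) (hfS : ∀ w ∈ f, w ∈ S) :
    SameBlockEdge G e f := by
  induction e with
  | _ a b =>
    have hab : G.Adj a b := he
    rcases h.exists_path (heS b (by simp)) (heS a (by simp)) hab.symm hf hfS with
      h | ⟨p, h1, -, h3, h4⟩
    · exact Or.inl (by rw [h, Sym2.eq_swap])
    · refine Or.inr ⟨a, Walk.cons hab p, ?_, by simp, by simp [h3]⟩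
      rw [Walk.cons_isCycle_iff]
      exact ⟨h1, by rwa [Sym2.eq_swap]⟩

end

section

variable {V : Type} {G : SimpleGraph V}

/-- The vertex set of the block containing the edge `e`. -/
def SimpleGraph.blockOf (G : SimpleGraph V) (e : Sym2 V) : Set V :=
  {w | ∃ f ∈ G.edgeSet, SameBlockEdge G e f ∧ w ∈ f}

theorem SameBlockEdge.mono {H : SimpleGraph V} (hHG : H ≤ G) {e f : Sym2 V}
    (h : SameBlockEdge H e f) : SameBlockEdge G e f := by
  rcases h with h | ⟨u, c, hc, he, hf⟩
  · exact Or.inl h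
  · exact Or.inr ⟨u, c.mapLe hHG, hc.mapLe hHG, by simpa using he, by simpa using hf⟩

theorem SimpleGraph.mem_blockOf_of_mem {e : Sym2 V} (he : e ∈ G.edgeSet) {w : V} (hw : w ∈ e) :
    w ∈ G.blockOf e := ⟨e, he, Or.inl rfl, hw⟩

theorem SimpleGraph.isBlockOf_blockOf {e : Sym2 V} (he : e ∈ G.edgeSet) :
    IsBlockOf G (G.blockOf e) := ⟨e, he, rfl⟩

theorem IsBlockOf.exists_adj {B : Set V} (hB : IsBlockOf G B) {w : V} (hw : w ∈ B) :
    ∃ u ∈ B, G.Adj w u := by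
  obtain ⟨e, he, rfl⟩ := hB
  obtain ⟨f, hf, hef, hwf⟩ := hw
  obtain ⟨u, rfl⟩ := Sym2.mem_iff_exists.1 hwf
  exact ⟨u, ⟨_, hf, hef, by simp⟩, hf⟩

theorem IsBlockOf.nonempty {B : Set V} (hB : IsBlockOf G B) : B.Nonempty := by
  obtain ⟨e, he, rfl⟩ := hB
  induction e with
  | _ a b => exact ⟨a, mem_blockOf_of_mem he (by simp)⟩

theorem IsBlockOf.sameBlockEdge [Finite V] {B : Set V} (h2 : IsTwoTree (G.induce B))
    {a b c d : V} (ha : a ∈ B) (hb : b ∈ B) (hc : c ∈ B) (hd : d ∈ B) (hab : G.Adj a b)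
    (hcd : G.Adj c d) : SameBlockEdge G s(a, b) s(c, d) := by
  classical
  have := Fintype.ofFinite V
  have hT := h2.twoTreeOn_restr (S := B.toFinset) fun v => Set.mem_toFinset
  refine SameBlockEdge.mono (H := G.restr B) (fun _ _ h => h.1)
    (hT.sameBlockEdge ⟨hab, ha, hb⟩ ⟨hcd, hc, hd⟩ ?_ ?_) <;>
  · simp only [Sym2.mem_iff, Set.mem_toFinset]
    rintro w (rfl | rfl) <;> assumption

theorem IsBlockOf.eq_blockOf [Finite V] (h2 : ∀ B, IsBlockOf G B → IsTwoTree (G.induce B))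
    {B : Set V} (hB : IsBlockOf G B) {a b : V} (ha : a ∈ B) (hb : b ∈ B) (hab : G.Adj a b) :
    B = G.blockOf s(a, b) := by
  have hsub : ∀ B, IsBlockOf G B → ∀ a ∈ B, ∀ b ∈ B, G.Adj a b → B ⊆ G.blockOf s(a, b) := by
    intro B hB a ha b hb hab w hw
    obtain ⟨u, hu, hwu⟩ := hB.exists_adj hw
    exact ⟨s(w, u), hwu, IsBlockOf.sameBlockEdge (h2 B hB) ha hb hw hu hab hwu, by simp⟩
  have h1 := hsub B hB a ha b hb hab
  obtain ⟨e, he, rfl⟩ := id hB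
  induction e with
  | _ c d =>
    exact h1.antisymm (hsub _ (isBlockOf_blockOf hab) c
      (h1 (mem_blockOf_of_mem he (by simp))) d (h1 (mem_blockOf_of_mem he (by simp))) he)

theorem IsBlockOf.eq_of_adj [Finite V] (h2 : ∀ B, IsBlockOf G B → IsTwoTree (G.induce B))
    {B B' : Set V} (hB : IsBlockOf G B) (hB' : IsBlockOf G B') {a b : V} (hab : G.Adj a b)
    (ha : a ∈ B) (hb : b ∈ B) (ha' : a ∈ B') (hb' : b ∈ B') : B = B' :=
  (hB.eq_blockOf h2 ha hb hab).trans (hB'.eq_blockOf h2 ha' hb' hab).symm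

theorem IsSkeleton.exists_spine [Finite V] {T : SimpleGraph V} (hG : IsSemiTwoTree G)
    (hT : IsSkeleton G T) {B : Set V} (hB : IsBlockOf G B) {x : B}
    (hx : IsSimplicial (G.induce B) x) :
    ∃ (s : B) (p : (G.induce B).Walk x s), x ≠ s ∧ IsSimplicial (G.induce B) s ∧
      p.length = (G.induce B).dist x s ∧ (∀ a b : B, T.Adj a b ↔ s(a, b) ∈ p.edges) ∧
      (T.restr B).edgeSet.ncard = p.length := by
  classical
  have h2 := fun B hB => (hG.2.1 B hB).1
  obtain ⟨hTG, S, hS, hTS⟩ := hT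
  obtain ⟨s₁, s₂, p, hne, h₁, h₂, hp, hlen, -, hSB⟩ := hS B hB
  have hinj : Function.Injective (Sym2.map (Subtype.val : B → V)) :=
    Sym2.map.injective Subtype.val_injective
  have hadj : ∀ a b : B, T.Adj a b ↔ s(a, b) ∈ p.edges := by
    intro a b
    have hab : T.Adj a b ↔ s((a : V), (b : V)) ∈ S B := by
      rw [← SimpleGraph.mem_edgeSet, hTS]
      simp only [Set.mem_iUnion, Set.mem_ofPred_eq, exists_prop]
      refine ⟨?_, fun h => ⟨B, hB, h⟩⟩
      rintro ⟨B', hB', h⟩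
      obtain ⟨t₁, t₂, q, -, -, -, -, -, -, hSB'⟩ := hS B' hB'
      have h' := h
      rw [hSB'] at h'
      obtain ⟨e, he, hea⟩ := h'
      induction e with
      | _ c d =>
        have hcd : G.Adj c d := q.adj_of_mem_edges he
        have hcd' : B = B' := by
          rcases Sym2.eq_iff.1 hea with ⟨h1, h2'⟩ | ⟨h1, h2'⟩
          · exact hB.eq_of_adj h2 hB' hcd (h1 ▸ a.2) (h2' ▸ b.2) c.2 d.2
          · exact hB.eq_of_adj h2 hB' hcd (h1 ▸ b.2) (h2' ▸ a.2) c.2 d.2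
        exact (congrArg S hcd').symm ▸ h
    rw [hab, hSB]
    constructor
    · rintro ⟨e, he, hea⟩
      have : e = s(a, b) := hinj hea
      exact this ▸ he
    · exact fun h => ⟨_, h, rfl⟩
  have hcard : (T.restr B).edgeSet.ncard = p.length := by
    have : (T.restr B).edgeSet = ((p.edges.toFinset.image (Sym2.map Subtype.val) : Finset (Sym2 V)) :
        Set (Sym2 V)) := by
      ext e
      simp only [Finset.coe_image, Set.mem_image, Finset.mem_coe, List.mem_toFinset]
      induction e with
      | _ c d =>
        constructor
        · rintro ⟨hcd, hc, hd⟩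
          exact ⟨s(⟨c, hc⟩, ⟨d, hd⟩), (hadj ⟨c, hc⟩ ⟨d, hd⟩).1 hcd, rfl⟩
        · rintro ⟨e, he, hec⟩
          induction e with
          | _ a b =>
            have h : (T.restr B).Adj a b := ⟨(hadj a b).2 he, a.2, b.2⟩
            have hec' : s((a : V), (b : V)) = s(c, d) := hec
            rw [← hec']
            exact h
    rw [this, Set.ncard_coe_finset, Finset.card_image_of_injective _ hinj,
      List.toFinset_card_of_nodup hp.edges_nodup, Walk.length_edges]
  rcases ((hG.2.1 B hB).simplicial_iff hne h₁ h₂ x).1 hx with rfl | rfl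
  · exact ⟨s₂, p, hne, h₂, hlen, hadj, hcard⟩
  · exact ⟨s₁, p.reverse, hne.symm, h₁, by rw [Walk.length_reverse, hlen, SimpleGraph.dist_comm],
      by simpa using hadj, by simpa using hcard⟩

theorem SimpleGraph.Walk.exists_crossing {H : SimpleGraph V} {S : Set V} {u w : V}
    (p : H.Walk u w) (hu : u ∉ S) (hw : w ∈ S) :
    ∃ y ∉ S, ∃ z ∈ S, H.Adj y z ∧ (H.restr Sᶜ).Reachable u y := by
  induction p with
  | nil => exact absurd hw hu
  | @cons a b c h p ih =>
    by_cases hb : b ∈ S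
    · exact ⟨a, hu, b, hb, h, .rfl⟩
    · obtain ⟨y, hy, z, hz, hyz, hr⟩ := ih hb hw
      have : (H.restr Sᶜ).Adj a b := ⟨h, hu, hb⟩
      exact ⟨y, hy, z, hz, hyz, this.reachable.trans hr⟩

theorem SimpleGraph.Walk.support_subset_of_restr {S : Set V} {u w : V} (p : (G.restr S).Walk u w)
    (hu : u ∈ S) : ∀ v ∈ p.support, v ∈ S := by
  induction p with
  | nil => simpa using hu
  | cons h p ih => simpa [hu] using ih h.2.2

/-- In a set closed under blocks and connected inside, no cycle can leave and return at another
vertex. -/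
theorem SimpleGraph.not_ear {S : Set V} {r : V} (hconn : ∀ u ∈ S, (G.restr S).Reachable u r)
    (hclosed : ∀ a ∈ S, ∀ b ∈ S, G.Adj a b → ∀ B, IsBlockOf G B → a ∈ B → b ∈ B → B ⊆ S)
    {x w y z : V} (hx : x ∈ S) (hw : w ∈ S) (hxw : w ≠ x) (hy : y ∉ S) (hz : z ∉ S)
    (hxy : G.Adj x y) (hzw : G.Adj z w) (hyz : (G.restr Sᶜ).Reachable y z) : False := by
  obtain ⟨p, hp⟩ := hyz.exists_isPath
  obtain ⟨q, hq⟩ := ((hconn w hw).trans (hconn x hx).symm).exists_isPath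
  have hpS := p.support_subset_of_restr hy
  have hqS := q.support_subset_of_restr hw
  have hle : ∀ S, G.restr S ≤ G := fun S _ _ h => h.1
  have hpath : ((p.mapLe (hle _)).append (Walk.cons hzw (q.mapLe (hle _)))).IsPath := by
    rw [Walk.isPath_def, Walk.support_append, List.nodup_append]
    simp only [Walk.support_mapLe_eq_support, Walk.support_cons, List.tail_cons]
    exact ⟨hp.support_nodup, hq.support_nodup, fun a ha b hb hab => hpS a ha (hab ▸ hqS b hb)⟩
  have hcyc : (Walk.cons hxy
      ((p.mapLe (hle _)).append (Walk.cons hzw (q.mapLe (hle _))))).IsCycle := by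
    rw [Walk.cons_isCycle_iff]
    refine ⟨hpath, ?_⟩
    simp only [Walk.edges_append, Walk.edges_cons, Walk.edges_mapLe_eq_edges, List.mem_append,
      List.mem_cons]
    rintro (h | h | h)
    · exact hpS _ (p.fst_mem_support_of_mem_edges h) hx
    · rcases Sym2.eq_iff.1 h with ⟨h, -⟩ | ⟨h, -⟩
      · exact hz (h ▸ hx)
      · exact hxw h.symm
    · exact hy (hqS _ (q.snd_mem_support_of_mem_edges h))
  cases q with
  | nil => exact hxw rfl
  | @cons _ v _ h q =>
    refine hy (hclosed w hw v h.2.2 h.1 _ (isBlockOf_blockOf (e := s(w, v)) h.1)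
      (mem_blockOf_of_mem (e := s(w, v)) h.1 (by simp))
      (mem_blockOf_of_mem (e := s(w, v)) h.1 (by simp)) ?_)
    exact ⟨s(x, y), hxy, Or.inr ⟨x, _, hcyc, by simp, by simp⟩, by simp⟩

end

section

variable {V : Type} {G T : SimpleGraph V} {r : V}

theorem SimpleGraph.support_restr_subset (S : Set V) : (G.restr S).support ⊆ S :=
  fun _ ⟨_, h⟩ => h.2.1

theorem SimpleGraph.restr_union {H : SimpleGraph V} (hHG : H ≤ G) {S B : Set V} {x : V}
    (hxS : x ∈ S) (hxB : x ∈ B)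
    (hno : ∀ a ∈ S, a ≠ x → ∀ b ∈ B, b ≠ x → ¬ G.Adj a b) :
    H.restr (S ∪ B) = H.restr S ⊔ H.restr B := by
  ext a b
  constructor
  · rintro ⟨hab, ha, hb⟩
    have h1 := hno a
    have h2 := hno b
    have h3 := hHG hab
    have h4 := h3.symm
    simp only [sup_adj, restr, Set.mem_union] at *
    by_cases hax : a = x <;> by_cases hbx : b = x <;> grind
  · rintro (h | h)
    · exact ⟨h.1, Or.inl h.2.1, Or.inl h.2.2⟩
    · exact ⟨h.1, Or.inr h.2.1, Or.inr h.2.2⟩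

theorem IsCutVertex.of_forall_not_reachable (hG : G.Connected) {x y : V} (hxy : y ≠ x)
    (hxr : r ≠ x) (h : ¬ (G.restr {u | u ≠ x}).Reachable y r) : IsCutVertex G x := by
  refine ⟨hG, fun hc => h ?_⟩
  let φ : G.induce {u | u ≠ x} →g G.restr {u | u ≠ x} :=
    ⟨Subtype.val, fun {a b} hab => ⟨hab, a.2, b.2⟩⟩
  exact (hc.preconnected ⟨y, hxy⟩ ⟨r, hxr⟩).map φ

variable [Fintype V] [DecidableEq V]

/-- The pebbling problems rooted at `r` on a union `S` of blocks and on its part of the skeleton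
can be exchanged; the shift `c` of the number of pebbles is determined by vertices, blocks and
skeleton edges. -/
structure SkeletonExchange (G T : SimpleGraph V) (r : V) (S : Set V) : Prop where
  root_mem : r ∈ S
  reachable : ∀ u ∈ S, (G.restr S).Reachable u r
  closed : ∀ a ∈ S, ∀ b ∈ S, G.Adj a b → ∀ B, IsBlockOf G B → a ∈ B → b ∈ B → B ⊆ S
  mem_support : ∀ v ∈ S, v = r ∨ IsCutVertex G v → v ∈ (T.restr S).support ∪ {r}
  transfer : ∃ c : ℤ,
    Transfer (G.restr S) S (T.restr S) ((T.restr S).support ∪ {r}) {v | v = r ∨ IsCutVertex G v}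
      r (-c) ∧
    Transfer (T.restr S) ((T.restr S).support ∪ {r}) (G.restr S) S {v | v = r ∨ IsCutVertex G v}
      r c ∧
    c + 2 * (T.restr S).edgeSet.ncard = S.ncard - 1 + {B : Set V | IsBlockOf G B ∧ B ⊆ S}.ncard

theorem Transfer.refl (H : SimpleGraph V) (X E : Set V) : Transfer H X H X E r 0 :=
  fun C hC => ⟨C, hC, fun _ _ => le_rfl, by simp, fun _ h => h⟩

theorem SkeletonExchange.singleton (G T : SimpleGraph V) (r : V) :
    SkeletonExchange G T r {r} := by
  have hbot : ∀ H : SimpleGraph V, H.restr {r} = ⊥ := fun H => by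
    ext a b
    simp only [restr, bot_adj, iff_false, not_and, Set.mem_singleton_iff]
    rintro h rfl rfl
    exact h.ne rfl
  have hsupp : (⊥ : SimpleGraph V).support ∪ {r} = {r} := by simp
  refine ⟨rfl, ?_, ?_, ?_, 0, ?_, ?_, ?_⟩
  · rintro u rfl; rfl
  · rintro a rfl b rfl h
    exact absurd rfl h.ne
  · rintro v rfl -
    simp
  · rw [hbot, hbot, hsupp, neg_zero]; exact .refl _ _ _
  · rw [hbot, hbot, hsupp]; exact .refl _ _ _
  · have : {B : Set V | IsBlockOf G B ∧ B ⊆ {r}} = ∅ := by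
      ext B
      simp only [Set.mem_ofPred_eq, Set.mem_empty_iff_false, iff_false, not_and]
      intro hB hBr
      obtain ⟨a, ha⟩ := hB.nonempty
      obtain ⟨b, hb, hab⟩ := hB.exists_adj ha
      exact hab.ne ((hBr ha).trans (hBr hb).symm)
    rw [hbot, this]
    simp

theorem SkeletonExchange.exists_ssuperset (hG : IsSemiTwoTree G) (hT : IsSkeleton G T)
    (hr : IsSimplicial G r ∨ IsCutVertex G r) {S : Set V} (hS : SkeletonExchange G T r S)
    (hne : S ≠ Set.univ) : ∃ S', S ⊂ S' ∧ SkeletonExchange G T r S' := by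
  classical
  have h2 := fun B hB => (hG.2.1 B hB).1
  obtain ⟨x, hx, y, hy, hxy⟩ : ∃ x ∈ S, ∃ y ∉ S, G.Adj x y := by
    obtain ⟨u, hu⟩ := (Set.ne_univ_iff_exists_notMem S).1 hne
    obtain ⟨p⟩ := hG.1.preconnected u r
    obtain ⟨y, hy, z, hz, hyz, -⟩ := p.exists_crossing hu hS.root_mem
    exact ⟨z, hz, y, hy, hyz.symm⟩
  have hear := fun {w z} hw hxw hz hzw => not_ear (w := w) (z := z) hS.reachable hS.closed hx hw
    hxw hy hz hxy hzw
  obtain ⟨B, rfl⟩ : ∃ B, B = G.blockOf s(x, y) := ⟨_, rfl⟩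
  set B := G.blockOf s(x, y) with hBdef
  have hB : IsBlockOf G B := isBlockOf_blockOf hxy
  have hxB : x ∈ B := mem_blockOf_of_mem (e := s(x, y)) hxy (by simp)
  have hyB : y ∈ B := mem_blockOf_of_mem (e := s(x, y)) hxy (by simp)
  have hBreach : ∀ w ∈ B, w ≠ x → ((G.restr B).restr {v | v ≠ x}).Reachable y w := by
    intro w hw hwx
    have := ((h2 B hB).twoTreeOn_restr (S := B.toFinset) fun v => Set.mem_toFinset).reachable x
      (Set.mem_toFinset.2 hyB) (Set.mem_toFinset.2 hw) hxy.ne' hwx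
    refine this.mono ?_
    rintro a b ⟨hab, ha, hb⟩
    exact ⟨hab, ha.2, hb.2⟩
  have hle : ∀ S, (G.restr S) ≤ G := fun S _ _ h => h.1
  have hmono : ∀ {H : SimpleGraph V} (S), H ≤ G → H.restr S ≤ G.restr S :=
    fun S h _ _ hab => ⟨h hab.1, hab.2⟩
  have hinter : ∀ v ∈ S, v ∈ B → v = x := by
    intro w hw hwB
    by_contra hwx
    obtain ⟨p⟩ := hBreach w hwB hwx
    obtain ⟨z, hz, w', hw', hzw, hyz⟩ := p.exists_crossing hy hw
    exact hear hw' hzw.2.2 hz hzw.1.1 (hyz.mono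
      (hmono (H := (G.restr B).restr {v | v ≠ x}) _ fun _ _ h => h.1.1))
  have hno : ∀ a ∈ S, a ≠ x → ∀ b ∈ B, b ≠ x → ¬ G.Adj a b := by
    intro a ha hax b hb hbx hab
    have hcompl : (G.restr B).restr {v | v ≠ x} ≤ G.restr Sᶜ := fun u v h =>
      ⟨h.1.1, fun hu => h.2.1 (hinter u hu h.1.2.1), fun hv => h.2.2 (hinter v hv h.1.2.2)⟩
    exact hear ha hax (fun hbS => hbx (hinter b hbS hb)) hab.symm ((hBreach b hb hbx).mono hcompl)
  have hxE : x = r ∨ IsCutVertex G x := by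
    by_contra! h
    refine h.2 (.of_forall_not_reachable hG.1 hxy.ne' h.1.symm fun ⟨p⟩ => ?_)
    obtain ⟨z, hz, w, hw, hzw, hyz⟩ := p.exists_crossing hy hS.root_mem
    exact hear hw hzw.2.2 hz hzw.1 (hyz.mono (hmono _ (hle _)))
  have hEB : ∀ v, (v = r ∨ IsCutVertex G v) → ∀ h : v ∈ B, IsSimplicial (G.induce B) ⟨v, h⟩ := by
    have hcut : ∀ v, IsCutVertex G v → ∀ h : v ∈ B, IsSimplicial (G.induce B) ⟨v, h⟩ :=
      fun v hv h => hG.2.2 v hv B hB h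
    rintro v (rfl | hv) h
    · rcases hr with hr | hr
      · intro a ha b hb hab
        exact hr (show G.Adj v a from ha) (show G.Adj v b from hb) fun h => hab (Subtype.ext h)
      · exact hcut v hr h
    · exact hcut v hv h
  obtain ⟨s, p, hxs, hs, hlen, hadj, hcard⟩ := hT.exists_spine hG hB (hEB x hxE hxB)
  have hxs' : ∀ v ∈ B, (v = r ∨ IsCutVertex G v) → v = x ∨ v = s := by
    intro v hv hvE
    rcases ((hG.2.1 B hB).simplicial_iff hxs (hEB x hxE hxB) hs ⟨v, hv⟩).1 (hEB v hvE hv) with h | h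
    · exact Or.inl (congrArg Subtype.val h)
    · exact Or.inr (congrArg Subtype.val h)
  have hend : ∀ {u v : B} (q : (G.induce B).Walk u v), u ≠ v →
      (∀ a b : B, T.Adj a b ↔ s(a, b) ∈ q.edges) → (u : V) ∈ (T.restr B).support := by
    intro u v q huv h
    cases q with
    | nil => exact absurd rfl huv
    | @cons _ w _ h' q => exact ⟨w, (h u w).2 (by simp), u.2, w.2⟩
  have hxsupp : x ∈ (T.restr B).support := hend p hxs hadj
  have hssupp : (s : V) ∈ (T.restr B).support :=
    hend p.reverse hxs.symm (by simpa using hadj)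
  have hsuppS : (T.restr S).support ∪ {r} ⊆ S :=
    Set.union_subset (support_restr_subset S) (Set.singleton_subset_iff.2 hS.root_mem)
  have hGu := restr_union le_rfl hx hxB hno
  have hTu := restr_union hT.1 hx hxB hno
  have hsupp : (T.restr (S ∪ B)).support ∪ {r} =
      ((T.restr S).support ∪ {r}) ∪ (T.restr B).support := by
    have : (T.restr (S ∪ B)).support = (T.restr S).support ∪ (T.restr B).support := by
      rw [hTu]
      ext v
      simp only [SimpleGraph.mem_support, sup_adj, Set.mem_union, exists_or]
    rw [this, Set.union_right_comm]
  refine ⟨S ∪ B, ⟨Set.subset_union_left, fun h => hy (h (Or.inr hyB))⟩, Or.inl hS.root_mem,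
    ?_, ?_, ?_, ?_⟩
  · have hxr := (hS.reachable x hx).mono (G.restr_mono (Set.subset_union_left (t := B)))
    rintro u (hu | hu)
    · exact (hS.reachable u hu).mono (G.restr_mono Set.subset_union_left)
    · by_cases hux : u = x
      · rwa [hux]
      · have hyx : (G.restr (S ∪ B)).Adj y x := ⟨hxy.symm, Or.inr hyB, Or.inl hx⟩
        refine ((hBreach u hu hux).symm.mono ?_).trans (hyx.reachable.trans hxr)
        exact fun a b h => G.restr_mono Set.subset_union_right h.1
  · intro a ha b hb hab B' hB' haB' hbB'
    have : (G.restr (S ∪ B)).Adj a b := ⟨hab, ha, hb⟩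
    rw [hGu] at this
    rcases this with h | h
    · exact (hS.closed a h.2.1 b h.2.2 hab B' hB' haB' hbB').trans Set.subset_union_left
    · rw [hB'.eq_of_adj h2 hB hab haB' hbB' h.2.1 h.2.2]
      exact Set.subset_union_right
  · intro v hv hvE
    rw [hsupp]
    rcases hv with hv | hv
    · exact Or.inl (hS.mem_support v hv hvE)
    · rcases hxs' v hv hvE with rfl | rfl
      · exact Or.inr hxsupp
      · exact Or.inr hssupp
  · obtain ⟨c, hc₁, hc₂, hc⟩ := hS.transfer
    obtain ⟨he₁, he₂⟩ := (hG.2.1 B hB).endTransfer hxs (hEB x hxE hxB) hs p hlen hT.1 hadj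
    have hHmem : ∀ (H : SimpleGraph V) (S : Set V) (u v), (H.restr S).Adj u v → u ∈ S ∧ v ∈ S :=
      fun _ _ _ _ h => h.2
    have hHsupp : ∀ (H : SimpleGraph V) (u v), H.Adj u v → u ∈ H.support ∧ v ∈ H.support :=
      fun _ u v h => ⟨⟨v, h⟩, ⟨u, h.symm⟩⟩
    have hHsupp' : ∀ u v, (T.restr S).Adj u v → u ∈ (T.restr S).support ∪ {r} ∧
        v ∈ (T.restr S).support ∪ {r} :=
      fun u v h => ⟨Or.inl (hHsupp _ u v h).1, Or.inl (hHsupp _ u v h).2⟩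
    have hinter' : ∀ v, v ∈ (T.restr S).support ∪ {r} → v ∈ (T.restr B).support → v = x :=
      fun v h h' => hinter v (hsuppS h) (support_restr_subset B h')
    have hxT := hS.mem_support x hx hxE
    have hrT : r ∈ (T.restr S).support ∪ {r} := Or.inr rfl
    refine ⟨c + (B.ncard - 2 * p.length), ?_, ?_, ?_⟩
    · rw [hsupp, hGu, hTu, neg_add]
      exact hc₁.glue he₁ hHsupp' (hHsupp _) hx hxT hxE hrT hinter hinter'
        fun v hv hvB => hxs' v hvB hv
    · rw [hsupp, hGu, hTu]
      exact hc₂.glue he₂ (hHmem _ _) (hHmem _ _) hxT hx hxE hS.root_mem hinter' hinter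
        fun v hv hvB => hxs' v (support_restr_subset B hvB) hv
    · have hcardS : (S ∪ B).ncard + 1 = S.ncard + B.ncard := by
        rw [← Set.ncard_union_add_ncard_inter]
        congr 1
        have : S ∩ B = {x} := by
          ext v
          simp only [Set.mem_inter_iff, Set.mem_singleton_iff]
          exact ⟨fun h => hinter v h.1 h.2, fun h => h ▸ ⟨hx, hxB⟩⟩
        rw [this, Set.ncard_singleton]
      have hcardT : (T.restr (S ∪ B)).edgeSet.ncard =
          (T.restr S).edgeSet.ncard + p.length := by
        rw [hTu, edgeSet_sup, Set.ncard_union_eq, hcard]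
        rw [Set.disjoint_left]
        intro e
        induction e with
        | _ a b =>
          intro (h : (T.restr S).Adj a b) (h' : (T.restr B).Adj a b)
          exact h.1.ne ((hinter a h.2.1 h'.2.1).trans (hinter b h.2.2 h'.2.2).symm)
      have hcardB : {B' : Set V | IsBlockOf G B' ∧ B' ⊆ S ∪ B}.ncard =
          {B' : Set V | IsBlockOf G B' ∧ B' ⊆ S}.ncard + 1 := by
        have : {B' : Set V | IsBlockOf G B' ∧ B' ⊆ S ∪ B} =
            insert B {B' : Set V | IsBlockOf G B' ∧ B' ⊆ S} := by
          ext B'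
          simp only [Set.mem_ofPred_eq, Set.mem_insert_iff]
          constructor
          · rintro ⟨hB', hsub⟩
            obtain ⟨a, ha⟩ := hB'.nonempty
            obtain ⟨b, hb, hab⟩ := hB'.exists_adj ha
            have : (G.restr (S ∪ B)).Adj a b := ⟨hab, hsub ha, hsub hb⟩
            rw [hGu] at this
            rcases this with h | h
            · exact Or.inr ⟨hB', hS.closed a h.2.1 b h.2.2 hab B' hB' ha hb⟩
            · exact Or.inl (hB'.eq_of_adj h2 hB hab ha hb h.2.1 h.2.2)
          · rintro (rfl | h)
            · exact ⟨hB, Set.subset_union_right⟩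
            · exact ⟨h.1, h.2.trans Set.subset_union_left⟩
        rw [this, Set.ncard_insert_of_notMem]
        exact fun h => hy (h.2 hyB)
      rw [hcardT, hcardB]
      push_cast
      linarith [congrArg (Nat.cast (R := ℤ)) hcardS, hc, Nat.cast_add (R := ℤ) (S ∪ B).ncard 1,
        Nat.cast_add (R := ℤ) S.ncard B.ncard, Nat.cast_one (R := ℤ)]

theorem SkeletonExchange.univ (hG : IsSemiTwoTree G) (hT : IsSkeleton G T)
    (hr : IsSimplicial G r ∨ IsCutVertex G r) : SkeletonExchange G T r Set.univ := by
  obtain ⟨S, hS⟩ := (Set.toFinite {S | SkeletonExchange G T r S}).exists_maximal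
    ⟨_, SkeletonExchange.singleton G T r⟩
  by_cases h : S = Set.univ
  · exact h ▸ hS.prop
  · obtain ⟨S', hSS', hS'⟩ := SkeletonExchange.exists_ssuperset hG hT hr hS.prop h
    exact absurd (hS.le_of_ge hS' hSS'.le) hSS'.not_ge

end

section

variable {V : Type} [Fintype V] {G : SimpleGraph V}

theorem not_forall_tSolvable_zero (G : SimpleGraph V) (r : V) {t : ℕ} (ht : 1 ≤ t) :
    ¬ ∀ C : V → ℕ, 0 ≤ ∑ᶠ v, C v → TSolvable G C r t := by
  classical
  intro h
  have := (FlowReach.tSolvable_iff.1 (h 0 (Nat.zero_le _))).le_sum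
  simp only [Pi.zero_apply, Finset.sum_const_zero] at this
  omega

theorem exists_forall_tSolvable (hG : G.Connected) (r : V) (t : ℕ) :
    ∃ s, ∀ C : V → ℕ, s ≤ ∑ᶠ v, C v → TSolvable G C r t := by
  classical
  refine ⟨∑ v, t * 2 ^ G.dist v r, fun C hC => FlowReach.tSolvable_iff.2 ?_⟩
  rw [finsum_eq_sum_of_fintype] at hC
  obtain ⟨v, -, hv⟩ := Finset.exists_le_of_sum_le ⟨r, Finset.mem_univ r⟩ hC
  obtain ⟨p, hp⟩ := hG.exists_walk_length_eq_dist v r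
  refine (FlowReach.walk p t).mono (fun w => ?_) le_rfl
  by_cases hw : w = v
  · subst hw; simpa [hp] using hv
  · simp [hw]

theorem tSolvable_induce_iff [DecidableEq V] {S : Set V}
    (hG : ∀ u v, G.Adj u v → u ∈ S ∧ v ∈ S) {C : V → ℕ} {r : V} (hr : r ∈ S) {t : ℕ} :
    TSolvable (G.induce S) (fun v => C v) ⟨r, hr⟩ t ↔ FlowReach G C (Pi.single r t) := by
  classical
  have : (Pi.single ⟨r, hr⟩ t : S → ℕ) = fun v : S => (Pi.single r t : V → ℕ) v := by
    ext v
    simp [Pi.single_apply, Subtype.ext_iff]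
  rw [FlowReach.tSolvable_iff, this, FlowReach.induce_iff hG]
  intro v hv
  exact Pi.single_eq_of_ne (by rintro rfl; exact hv hr) _

end

/-- for a semi-2-tree `G` on `n` vertices with skeleton `T`, `b`
blocks, and `r` a simplicial vertex or cut-vertex of `G` (which then lies on the
skeleton), `π_t(G,r) = π_t(T,r) + (n−1) + b − 2e(T)`, where the skeleton is viewed
as a tree on its support. -/
theorem semiTwoTree_pebbling_formula {V : Type} [Fintype V] (G T : SimpleGraph V)
    (hG : IsSemiTwoTree G) (hT : IsSkeleton G T) (r : V)
    (hr : IsSimplicial G r ∨ IsCutVertex G r) (hrT : r ∈ T.support)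
    (n b t : ℕ) (hn : Fintype.card V = n)
    (hb : {B : Set V | IsBlockOf G B}.ncard = b) (ht : 1 ≤ t) :
    piT G r t =
      piT (T.induce T.support) ⟨r, hrT⟩ t + (n - 1) + b - 2 * T.edgeSet.ncard := by
  classical
  obtain ⟨c, hGT, hTG, hc⟩ := (SkeletonExchange.univ hG hT hr).transfer
  have hsupp : T.support ∪ {r} = T.support :=
    Set.union_eq_left.2 (Set.singleton_subset_iff.2 hrT)
  have hTadj : ∀ u v, T.Adj u v → u ∈ T.support ∧ v ∈ T.support :=
    fun u v h => ⟨⟨v, h⟩, ⟨u, h.symm⟩⟩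
  simp only [restr_univ, hsupp, Set.subset_univ, and_true, Set.ncard_univ,
    Nat.card_eq_fintype_card] at hGT hTG hc
  rw [hb, hn] at hc
  have hn1 : 1 ≤ n := hn ▸ Fintype.card_pos_iff.2 ⟨r⟩
  set UG := {s | ∀ C : V → ℕ, s ≤ ∑ᶠ v, C v → TSolvable G C r t} with hUG
  set UT := {s | ∀ C : T.support → ℕ, s ≤ ∑ᶠ v, C v →
    TSolvable (T.induce T.support) C ⟨r, hrT⟩ t} with hUT
  have hTtoG : ∀ s ∈ UT, ∀ m : ℕ, (s : ℤ) + c ≤ m → m ∈ UG := by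
    intro s hs m hm C hC
    obtain ⟨C', hC'0, -, hsum, hflow⟩ := hGT C fun v hv => absurd (Set.mem_univ v) hv
    refine FlowReach.tSolvable_iff.2 (hflow t ((tSolvable_induce_iff hTadj hrT).1 (hs _ ?_)))
    rw [finsum_eq_sum_of_fintype] at hC ⊢
    rw [sum_coe_of_forall_notMem_eq_zero hC'0]
    omega
  have hGtoT : ∀ m ∈ UG, ∀ s : ℕ, (m : ℤ) - c ≤ s → s ∈ UT := by
    intro m hm s hs C hC
    let D : V → ℕ := fun v => if h : v ∈ T.support then C ⟨v, h⟩ else 0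
    have hD0 : ∀ v, v ∉ T.support → D v = 0 := fun v hv => dif_neg hv
    have hDC : (fun v : T.support => D v) = C := by ext v; simp [D]
    obtain ⟨C', -, -, hsum, hflow⟩ := hTG D hD0
    have hsolv := (tSolvable_induce_iff hTadj hrT).2 <|
      hflow t (FlowReach.tSolvable_iff.1 (hm C' ?_))
    · rwa [hDC] at hsolv
    · rw [finsum_eq_sum_of_fintype] at hC ⊢
      rw [← hDC, sum_coe_of_forall_notMem_eq_zero hD0] at hC
      omega
  have hGne : UG.Nonempty := exists_forall_tSolvable hG.1 r t
  have hTne : UT.Nonempty := by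
    obtain ⟨m, hm⟩ := hGne
    exact ⟨_, hGtoT m hm _ (Int.self_le_toNat _)⟩
  have hG0 : 0 ∉ UG := not_forall_tSolvable_zero G r ht
  have hT0 : 0 ∉ UT := not_forall_tSolvable_zero (T.induce T.support) ⟨r, hrT⟩ ht
  have hle : ((sInf UG : ℕ) : ℤ) ≤ sInf UT + c := by
    by_contra! h
    by_cases h0 : 0 ≤ ((sInf UT : ℕ) : ℤ) + c
    · have := Nat.sInf_le (hTtoG _ (Nat.sInf_mem hTne) _ (Int.self_le_toNat _))
      omega
    · exact hG0 (hTtoG _ (Nat.sInf_mem hTne) 0 (by push_cast; omega))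
  have hge : ((sInf UT : ℕ) : ℤ) ≤ sInf UG - c := by
    by_contra! h
    by_cases h0 : 0 ≤ ((sInf UG : ℕ) : ℤ) - c
    · have := Nat.sInf_le (hGtoT _ (Nat.sInf_mem hGne) _ (Int.self_le_toNat _))
      omega
    · exact hT0 (hGtoT _ (Nat.sInf_mem hGne) 0 (by push_cast; omega))
  change sInf UG = sInf UT + (n - 1) + b - 2 * T.edgeSet.ncard
  omega
end

section
/- Let T be a tree of diameter d, r* a vertex with ecc(r*) = d, and r a vertex with ecc(r) < d. Then π_t(T,r) ≤ π_t(T,r*) − 2^{d−2}. -/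
open SimpleGraph

namespace TreePebbling

variable {V : Type} {T : SimpleGraph V}

/-! ### Distances in trees -/

theorem eq_of_adj_of_dist_eq_succ (hT : T.IsTree) {r u v v' : V} (hv : T.Adj u v)
    (hv' : T.Adj u v') (h : T.dist r u = T.dist r v + 1) (h' : T.dist r u = T.dist r v' + 1) :
    v = v' := by
  obtain ⟨p, hp⟩ := hT.connected.exists_walk_length_eq_dist v r
  obtain ⟨q, hq⟩ := hT.connected.exists_walk_length_eq_dist v' r
  have hp' : (Walk.cons hv p).IsPath := Walk.isPath_of_length_eq_dist _ (by
    rw [Walk.length_cons, hp, T.dist_comm, ← h, T.dist_comm])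
  have hq' : (Walk.cons hv' q).IsPath := Walk.isPath_of_length_eq_dist _ (by
    rw [Walk.length_cons, hq, T.dist_comm, ← h', T.dist_comm])
  have := congrArg Subtype.val
    ((isAcyclic_iff_subsingleton_path.mp hT.isAcyclic u r).elim ⟨_, hp'⟩ ⟨_, hq'⟩)
  simp only [Walk.cons.injEq] at this
  exact this.1

theorem dist_le_succ_of_adj (hT : T.IsTree) {u v : V} (h : T.Adj u v) (w : V) :
    T.dist u w ≤ T.dist v w + 1 := by
  have := hT.connected.dist_triangle (u := u) (v := v) (w := w)
  rw [dist_eq_one_iff_adj.mpr h] at this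
  omega

theorem exists_adj_dist_eq_succ (hT : T.IsTree) {r u : V} (h : u ≠ r) :
    ∃ v, T.Adj u v ∧ T.dist r u = T.dist r v + 1 := by
  obtain ⟨p, hp⟩ := hT.connected.exists_walk_length_eq_dist u r
  cases p with
  | nil => exact absurd rfl h
  | cons hv q =>
    rename_i v
    refine ⟨v, hv, ?_⟩
    have h1 := dist_le q
    have h2 := dist_le_succ_of_adj hT hv r
    rw [Walk.length_cons] at hp
    rw [T.dist_comm (u := r), T.dist_comm (u := r)]
    omega

theorem exists_parent (hT : T.IsTree) (r : V) :
    ∃ par : V → V, (∀ u, u ≠ r → T.Adj u (par u) ∧ T.dist r u = T.dist r (par u) + 1) ∧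
      ∀ u v, T.Adj u v → T.dist r u = T.dist r v + 1 → par u = v := by
  have H : ∀ u, ∃ v, u ≠ r → T.Adj u v ∧ T.dist r u = T.dist r v + 1 := fun u => by
    by_cases h : u = r
    · exact ⟨u, fun h' => absurd h h'⟩
    · obtain ⟨v, hv⟩ := exists_adj_dist_eq_succ hT h
      exact ⟨v, fun _ => hv⟩
  choose par hpar using H
  refine ⟨par, hpar, fun u v huv hd => ?_⟩
  have hu : u ≠ r := by
    rintro rfl
    simp at hd
  exact eq_of_adj_of_dist_eq_succ hT (hpar u hu).1 huv (hpar u hu).2 hd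

/-- The two sides of an edge are joined only through it. -/
theorem dist_across_edge (hT : T.IsTree) {w : V} : ∀ (n : ℕ) {v v' w' : V}, T.Adj v v' →
    T.dist v' w' = n → T.dist v' w = T.dist v w + 1 → T.dist v w' = T.dist v' w' + 1 →
    T.dist w w' = T.dist w v + 1 + T.dist v' w' := by
  intro n
  induction n with
  | zero =>
    intro v v' w' _ hn hw _
    have : v' = w' := hT.connected.dist_eq_zero_iff.mp hn
    subst this
    rw [T.dist_comm (u := w), T.dist_comm (u := w), hw]
    simp
  | succ n ih =>
    intro v v' w' hadj hn hw hw'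
    have hne : v' ≠ w' := by
      rintro rfl
      simp at hn
    obtain ⟨x, hx, hdx⟩ := exists_adj_dist_eq_succ hT hne
    rw [T.dist_comm (u := w'), T.dist_comm (u := w')] at hdx
    have hxv : x ≠ v := by
      rintro rfl
      omega
    have hxw : T.dist x w = T.dist v' w + 1 := by
      have h2 := hT.dist_eq_dist_add_one_of_adj w hx
      rcases h2 with h2 | h2
      · refine absurd (eq_of_adj_of_dist_eq_succ hT hx hadj.symm h2 ?_) hxv
        rw [T.dist_comm (u := w), T.dist_comm (u := w)]
        exact hw
      · rw [T.dist_comm (v := w), T.dist_comm (v := w)]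
        exact h2
    have := ih hx (by omega) hxw hdx
    have e1 := T.dist_comm (u := w) (v := v)
    have e2 := T.dist_comm (u := w) (v := v')
    omega

theorem between_of_adj_roots (hT : T.IsTree) {v v' u w : V} (h : T.Adj v v') (huv : u ≠ v)
    (hb : T.dist v w = T.dist v u + T.dist u w) : T.dist v' w = T.dist v' u + T.dist u w := by
  have h1 := hT.dist_eq_dist_add_one_of_adj u h
  have h2 := hT.dist_eq_dist_add_one_of_adj w h
  rw [T.dist_comm (u := u), T.dist_comm (u := u) (v := v')] at h1
  rw [T.dist_comm (u := w), T.dist_comm (u := w) (v := v')] at h2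
  have h3 := hT.connected.dist_triangle (u := v') (v := u) (w := w)
  rcases h1 with h1 | h1
  · rcases h2 with h2 | h2 <;> omega
  · rcases h2 with h2 | h2
    · exfalso
      obtain ⟨x, hx, hdx⟩ := exists_adj_dist_eq_succ hT huv.symm
      rw [T.dist_comm (u := u), T.dist_comm (u := u)] at hdx
      have h4 := hT.connected.dist_triangle (u := x) (v := u) (w := w)
      have h5 := dist_le_succ_of_adj hT hx w
      have : v' = x := by
        apply eq_of_adj_of_dist_eq_succ hT (r := w) h hx <;>
        rw [T.dist_comm (u := w), T.dist_comm (u := w)] <;> omega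
      subst this
      omega
    · omega

/-! ### Heights of branches -/

variable [Fintype V]

open Classical in
/-- The height of the subtree hanging below `u` when the tree is rooted at `r`. -/
noncomputable def branchHeight (T : SimpleGraph V) (r u : V) : ℕ :=
  (Finset.univ.filter fun w => T.dist r w = T.dist r u + T.dist u w).sup (T.dist u)

theorem le_branchHeight {r u w : V} (h : T.dist r w = T.dist r u + T.dist u w) :
    T.dist u w ≤ branchHeight T r u := by
  classical
  exact Finset.le_sup (f := T.dist u) (by simpa using h)

theorem exists_eq_branchHeight (T : SimpleGraph V) (r u : V) :
    ∃ w, T.dist r w = T.dist r u + T.dist u w ∧ T.dist u w = branchHeight T r u := by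
  classical
  obtain ⟨w, hw, h⟩ := Finset.exists_mem_eq_sup
    (Finset.univ.filter fun w => T.dist r w = T.dist r u + T.dist u w)
    ⟨u, by simp⟩ (T.dist u)
  exact ⟨w, by simpa using hw, h.symm⟩

theorem branchHeight_self (T : SimpleGraph V) (r : V) : branchHeight T r r = eccG T r := by
  have hbdd : BddAbove (Set.range fun v => T.dist r v) := Set.finite_range _ |>.bddAbove
  have : Nonempty V := ⟨r⟩
  apply le_antisymm
  · obtain ⟨w, -, hw⟩ := exists_eq_branchHeight T r r
    rw [← hw]
    exact le_ciSup hbdd w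
  · exact ciSup_le fun w => le_branchHeight (by simp)

theorem dist_le_diamG (T : SimpleGraph V) (u v : V) : T.dist u v ≤ diamG T :=
  (le_ciSup (f := fun v => T.dist u v) (Set.finite_range _).bddAbove v).trans
    (le_ciSup (f := fun u => eccG T u) (Set.finite_range _).bddAbove u)

theorem branchHeight_lt_of_parent (hT : T.IsTree) {r u p : V} (h : T.Adj u p)
    (hd : T.dist r u = T.dist r p + 1) : branchHeight T r u + 1 ≤ branchHeight T r p := by
  obtain ⟨w, hw, hh⟩ := exists_eq_branchHeight T r u
  have h1 := dist_le_succ_of_adj hT h.symm w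
  have h2 := hT.connected.dist_triangle (u := r) (v := p) (w := w)
  have := le_branchHeight (T := T) (r := r) (u := p) (w := w) (by omega)
  omega

theorem exists_child_branchHeight (hT : T.IsTree) {r u : V} (h : 0 < branchHeight T r u) :
    ∃ c, T.Adj c u ∧ T.dist r c = T.dist r u + 1 ∧
      branchHeight T r u ≤ branchHeight T r c + 1 := by
  obtain ⟨w, hw, hh⟩ := exists_eq_branchHeight T r u
  have hne : u ≠ w := by
    rintro rfl
    simp at hh
    omega
  obtain ⟨c, hc, hdc⟩ := exists_adj_dist_eq_succ hT hne
  rw [T.dist_comm (u := w), T.dist_comm (u := w)] at hdc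
  have h1 := hT.connected.dist_triangle (u := r) (v := c) (w := w)
  have h2 := dist_le_succ_of_adj hT hc.symm r
  rw [T.dist_comm (v := r), T.dist_comm (v := r)] at h2
  have := le_branchHeight (T := T) (r := r) (u := c) (w := w) (by omega)
  exact ⟨c, hc.symm, by omega, by omega⟩

theorem branchHeight_eq_of_adj_roots (hT : T.IsTree) {v v' u : V} (h : T.Adj v v') (hv : u ≠ v)
    (hv' : u ≠ v') : branchHeight T v u = branchHeight T v' u := by
  apply le_antisymm
  · obtain ⟨w, hw, hh⟩ := exists_eq_branchHeight T v u
    rw [← hh]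
    exact le_branchHeight (between_of_adj_roots hT h hv hw)
  · obtain ⟨w, hw, hh⟩ := exists_eq_branchHeight T v' u
    rw [← hh]
    exact le_branchHeight (between_of_adj_roots hT h.symm hv' hw)

theorem branchHeight_root_eq_max (hT : T.IsTree) {v p : V} (h : T.Adj v p) :
    branchHeight T v v = max (branchHeight T p v) (branchHeight T v p + 1) := by
  have e : T.dist v p = 1 := dist_eq_one_iff_adj.mpr h
  have e' : T.dist p v = 1 := dist_eq_one_iff_adj.mpr h.symm
  apply le_antisymm
  · obtain ⟨w, -, hh⟩ := exists_eq_branchHeight T v v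
    have h2 := hT.dist_eq_dist_add_one_of_adj w h
    rw [T.dist_comm (u := w), T.dist_comm (u := w)] at h2
    rcases h2 with h2 | h2
    · have := le_branchHeight (T := T) (r := v) (u := p) (w := w) (by omega)
      omega
    · have := le_branchHeight (T := T) (r := p) (u := v) (w := w) (by omega)
      omega
  · refine max_le ?_ (branchHeight_lt_of_parent hT h.symm (by simp [e]))
    obtain ⟨w, -, hh⟩ := exists_eq_branchHeight T p v
    rw [← hh]
    exact le_branchHeight (by simp)

theorem branchHeight_add_le_diamG (hT : T.IsTree) {v p : V} (h : T.Adj v p) :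
    branchHeight T p v + branchHeight T v p + 1 ≤ diamG T := by
  have e : T.dist v p = 1 := dist_eq_one_iff_adj.mpr h
  have e' : T.dist p v = 1 := dist_eq_one_iff_adj.mpr h.symm
  obtain ⟨w, hw, hh⟩ := exists_eq_branchHeight T p v
  obtain ⟨w', hw', hh'⟩ := exists_eq_branchHeight T v p
  have := dist_across_edge hT (w := w) _ h (w' := w') rfl (by omega) (by omega)
  have h1 := dist_le_diamG T w w'
  have := T.dist_comm (u := w) (v := v)
  omega

/-! ### Pebbling on a rooted tree -/

theorem sum_mul_pebStep (f : V → ℕ) {C C' : V → ℕ} {u v : V} (huv : u ≠ v)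
    (hu : C' u + 2 = C u) (hv : C' v = C v + 1) (hw : ∀ w, w ≠ u → w ≠ v → C' w = C w) :
    ∑ w, f w * C' w + 2 * f u = ∑ w, f w * C w + f v := by
  classical
  have : ∀ w, f w * C' w + (if w = u then 2 * f u else 0) =
      f w * C w + (if w = v then f v else 0) := by
    intro w
    by_cases h1 : w = u
    · subst h1
      simp [huv, ← hu]
      ring
    · by_cases h2 : w = v
      · subst h2
        simp [h1, hv]
        ring
      · simp [h1, h2, hw w h1 h2]
  have := Finset.sum_congr (rfl : (Finset.univ : Finset V) = Finset.univ) fun w _ => this w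
  simpa [Finset.sum_add_distrib] using this

/-- One less than the `t`-fold pebbling number of the tree rooted at `r`. -/
noncomputable def maxUnsolvableSize (T : SimpleGraph V) (r : V) (t : ℕ) : ℕ := by
  classical
  exact (t - 1) * 2 ^ branchHeight T r r + ∑ u ∈ Finset.univ.erase r, 2 ^ branchHeight T r u

theorem exists_pebbling_to_root (hT : T.IsTree) (r : V) : ∀ (n : ℕ) (C : V → ℕ), ∑ v, C v = n →
    ∃ C', Relation.ReflTransGen (PebStep T) C C' ∧ (∀ u, u ≠ r → C' u ≤ 1) ∧
      ∑ v, 2 ^ branchHeight T r v * C v ≤ ∑ v, 2 ^ branchHeight T r v * C' v := by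
  classical
  intro n
  induction n using Nat.strong_induction_on with
  | _ n ih =>
    intro C hC
    by_cases hs : ∀ u, u ≠ r → C u ≤ 1
    · exact ⟨C, .refl, hs, le_rfl⟩
    · push Not at hs
      obtain ⟨u, hur, hu⟩ := hs
      obtain ⟨p, hp, hd⟩ := exists_adj_dist_eq_succ hT hur
      let C₁ := Function.update (Function.update C u (C u - 2)) p (C p + 1)
      have h1 : C₁ u + 2 = C u := by
        simp [C₁, hp.ne]
        omega
      have h2 : C₁ p = C p + 1 := by simp [C₁]
      have h3 : ∀ w, w ≠ u → w ≠ p → C₁ w = C w := fun w hw hw' => by simp [C₁, hw, hw']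
      have hsum := sum_mul_pebStep (fun _ => 1) hp.ne h1 h2 h3
      have hw := sum_mul_pebStep (fun v => 2 ^ branchHeight T r v) hp.ne h1 h2 h3
      simp only [one_mul] at hsum
      obtain ⟨C', hr, hle, hW⟩ := ih (∑ v, C₁ v) (by omega) C₁ rfl
      refine ⟨C', .head ⟨u, p, hp, by omega, h1, h2, h3⟩ hr, hle, ?_⟩
      have h4 : 2 ^ (branchHeight T r u + 1) ≤ 2 ^ branchHeight T r p :=
        Nat.pow_le_pow_right (by norm_num) (branchHeight_lt_of_parent hT hp hd)
      rw [pow_succ] at h4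
      omega

theorem tSolvable_of_maxUnsolvableSize_lt (hT : T.IsTree) {r : V} {t : ℕ} {C : V → ℕ}
    (hC : maxUnsolvableSize T r t < ∑ v, C v) : TSolvable T C r t := by
  classical
  obtain ⟨C', hr, hle, hW⟩ := exists_pebbling_to_root hT r _ C rfl
  refine ⟨C', hr, ?_⟩
  by_contra! hlt
  have h1 : ∑ v, C v ≤ ∑ v, 2 ^ branchHeight T r v * C v :=
    Finset.sum_le_sum fun v _ => Nat.le_mul_of_pos_left _ (by positivity)
  have h2 : ∑ v, 2 ^ branchHeight T r v * C' v ≤ maxUnsolvableSize T r t := by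
    rw [← Finset.add_sum_erase _ _ (Finset.mem_univ r), maxUnsolvableSize]
    refine add_le_add ?_ (Finset.sum_le_sum fun v hv => ?_)
    · rw [mul_comm]
      exact Nat.mul_le_mul_right _ (by omega)
    · calc _ ≤ 2 ^ branchHeight T r v * 1 :=
            Nat.mul_le_mul_left _ (hle v (Finset.ne_of_mem_erase hv))
        _ = _ := mul_one _
  omega

open Classical in
/-- A certificate of unsolvability: `m c` bounds the number of pebbles that cross the edge from
`c` to its parent, so that fewer than `t` pebbles are able to gather at `r`. -/
def IsBlocked (par : V → V) (r : V) (t : ℕ) (C : V → ℕ) : Prop :=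
  ∃ m : V → ℕ, ∀ u, C u + (∑ c with c ≠ r ∧ par c = u, m c) ≤ if u = r then t - 1 else 2 * m u + 1

open Classical in
theorem sum_children_add_single (par : V → V) (r : V) (m : V → ℕ) {c₀ : V} (h : c₀ ≠ r) (u : V) :
    (∑ c with c ≠ r ∧ par c = u, (m c + if c = c₀ then 1 else 0)) =
      (∑ c with c ≠ r ∧ par c = u, m c) + if u = par c₀ then 1 else 0 := by
  rw [Finset.sum_add_distrib, Finset.sum_ite_eq']
  congr 1
  refine if_congr ?_ rfl rfl
  simp [h, @eq_comm _ u]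

/-- Trading one pebble at a vertex for at most two pebbles at a child keeps a configuration
blocked. -/
theorem IsBlocked.of_down {par : V → V} {r : V} {t : ℕ} {C C' : V → ℕ} {c : V}
    (hC : IsBlocked par r t C) (hc : c ≠ r) (hp : c ≠ par c) (h1 : C' (par c) + 1 ≤ C (par c))
    (h2 : C' c ≤ C c + 2) (h3 : ∀ w, w ≠ c → w ≠ par c → C' w = C w) :
    IsBlocked par r t C' := by
  classical
  obtain ⟨m, hm⟩ := hC
  refine ⟨fun x => m x + if x = c then 1 else 0, fun u => ?_⟩
  rw [sum_children_add_single par r m hc]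
  have := hm u
  by_cases hu : u = c
  · subst hu
    simp only [hc, hp, if_true, if_false] at this ⊢
    omega
  · by_cases hu' : u = par c
    · subst hu'
      simp only [hu, if_true, if_false] at this ⊢
      split_ifs at this ⊢ <;> omega
    · simp only [hu, hu', h3 u hu hu', if_false]
      simpa using this

theorem IsBlocked.of_up {par : V → V} {r : V} {t : ℕ} {C C' : V → ℕ} {c : V}
    (hC : IsBlocked par r t C) (hc : c ≠ r) (hp : c ≠ par c) (h1 : C' c + 2 = C c)
    (h2 : C' (par c) = C (par c) + 1) (h3 : ∀ w, w ≠ c → w ≠ par c → C' w = C w) :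
    IsBlocked par r t C' := by
  classical
  obtain ⟨m, hm⟩ := hC
  have hmc : 1 ≤ m c := by
    have := hm c
    simp only [hc, if_false] at this
    omega
  obtain ⟨m', rfl⟩ : ∃ m' : V → ℕ, m = fun x => m' x + if x = c then 1 else 0 := by
    refine ⟨Function.update m c (m c - 1), funext fun x => ?_⟩
    by_cases hx : x = c
    · subst hx
      simp [hmc]
    · simp [hx]
  refine ⟨m', fun u => ?_⟩
  have := hm u
  rw [sum_children_add_single par r m' hc] at this
  by_cases hu : u = c
  · subst hu
    simp only [hc, hp, if_true, if_false] at this ⊢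
    omega
  · by_cases hu' : u = par c
    · subst hu'
      simp only [hu, if_true, if_false] at this ⊢
      split_ifs at this ⊢ <;> omega
    · simp only [hu, hu', if_false] at this
      rw [h3 u hu hu']
      simpa using this

theorem IsBlocked.pebStep (hT : T.IsTree) {par : V → V} {r : V} {t : ℕ} {C C' : V → ℕ}
    (hpar : ∀ u v, T.Adj u v → T.dist r u = T.dist r v + 1 → par u = v)
    (hC : IsBlocked par r t C) (h : PebStep T C C') : IsBlocked par r t C' := by
  obtain ⟨u, v, hadj, -, h1, h2, h3⟩ := h
  rcases hT.dist_eq_dist_add_one_of_adj r hadj with hd | hd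
  · obtain rfl := hpar u v hadj hd
    refine hC.of_up ?_ hadj.ne h1 h2 h3
    rintro rfl
    simp at hd
  · obtain rfl := hpar v u hadj.symm hd
    refine hC.of_down ?_ hadj.ne' (by omega) (by omega) fun w hw hw' => h3 w hw' hw
    rintro rfl
    simp at hd

theorem IsBlocked.not_tSolvable (hT : T.IsTree) {par : V → V} {r : V} {t : ℕ} (ht : 1 ≤ t)
    {C : V → ℕ} (hpar : ∀ u v, T.Adj u v → T.dist r u = T.dist r v + 1 → par u = v)
    (hC : IsBlocked par r t C) : ¬ TSolvable T C r t := by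
  rintro ⟨C', hr, hle⟩
  have : IsBlocked par r t C' := by
    clear hle
    induction hr with
    | refl => exact hC
    | tail _ hs ih => exact ih.pebStep hT hpar hs
  obtain ⟨m, hm⟩ := this
  have := hm r
  simp only [if_true] at this
  omega

theorem exists_isBlocked_sum_ge (hT : T.IsTree) {par : V → V} {r : V} {t : ℕ}
    (hpar : ∀ u v, T.Adj u v → T.dist r u = T.dist r v + 1 → par u = v) :
    ∀ (n : ℕ) (C : V → ℕ), IsBlocked par r t C →
      ∑ v, 2 ^ branchHeight T r v * C v - ∑ v, C v = n →
      ∃ D, IsBlocked par r t D ∧ ∑ v, 2 ^ branchHeight T r v * C v ≤ ∑ v, D v := by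
  classical
  intro n
  induction n using Nat.strong_induction_on with
  | _ n ih =>
    intro C hC hn
    by_cases hs : ∀ u, C u ≠ 0 → branchHeight T r u = 0
    · refine ⟨C, hC, Finset.sum_le_sum fun v _ => ?_⟩
      by_cases hv : C v = 0
      · simp [hv]
      · simp [hs v hv]
    · push Not at hs
      obtain ⟨u, hu, hh⟩ := hs
      obtain ⟨c, hc, hd, hle⟩ := exists_child_branchHeight hT (Nat.pos_of_ne_zero hh)
      have hcr : c ≠ r := by
        rintro rfl
        simp at hd
      let C₁ := Function.update (Function.update C u (C u - 1)) c (C c + 2)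
      have h1 : C₁ c = C c + 2 := by simp [C₁]
      have h2 : C₁ u + 1 = C u := by
        simp [C₁, hc.ne']
        omega
      have h3 : ∀ w, w ≠ c → w ≠ u → C₁ w = C w := fun w hw hw' => by simp [C₁, hw, hw']
      have hsum := sum_mul_pebStep (fun _ => 1) hc.ne h1.symm h2.symm
        fun w hw hw' => (h3 w hw hw').symm
      have hw := sum_mul_pebStep (fun v => 2 ^ branchHeight T r v) hc.ne h1.symm h2.symm
        fun w hw hw' => (h3 w hw hw').symm
      simp only [one_mul] at hsum
      have hb : IsBlocked par r t C₁ := by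
        obtain rfl := hpar c u hc hd
        exact hC.of_down hcr hc.ne h2.le h1.le h3
      have h4 : 2 ^ branchHeight T r u = 2 * 2 ^ branchHeight T r c := by
        have := branchHeight_lt_of_parent hT hc hd
        rw [show branchHeight T r u = branchHeight T r c + 1 by omega, pow_succ, mul_comm]
      have h5 : ∑ v, C₁ v ≤ ∑ v, 2 ^ branchHeight T r v * C₁ v :=
        Finset.sum_le_sum fun v _ => Nat.le_mul_of_pos_left _ (by positivity)
      obtain ⟨D, hD, hDW⟩ := ih _ (by omega) C₁ hb rfl
      exact ⟨D, hD, by omega⟩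

theorem exists_not_tSolvable (hT : T.IsTree) (r : V) {t : ℕ} (ht : 1 ≤ t) :
    ∃ C : V → ℕ, maxUnsolvableSize T r t ≤ ∑ v, C v ∧ ¬ TSolvable T C r t := by
  classical
  obtain ⟨par, -, hpar⟩ := exists_parent hT r
  let E : V → ℕ := fun u => if u = r then t - 1 else 1
  have hE : IsBlocked par r t E := ⟨fun _ => 0, fun u => by simp [E]⟩
  obtain ⟨D, hD, hDW⟩ := exists_isBlocked_sum_ge hT hpar _ E hE rfl
  refine ⟨D, le_trans (le_of_eq ?_) hDW, hD.not_tSolvable hT ht hpar⟩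
  rw [← Finset.add_sum_erase _ _ (Finset.mem_univ r), maxUnsolvableSize]
  congr 1
  · simp [E, mul_comm]
  · refine Finset.sum_congr rfl fun v hv => ?_
    simp [E, Finset.ne_of_mem_erase hv]

theorem piT_eq (hT : T.IsTree) (r : V) {t : ℕ} (ht : 1 ≤ t) :
    piT T r t = maxUnsolvableSize T r t + 1 := by
  have hmem : maxUnsolvableSize T r t + 1 ∈
      {s | ∀ C : V → ℕ, s ≤ ∑ᶠ v, C v → TSolvable T C r t} := fun C hC => by
    rw [finsum_eq_sum_of_fintype] at hC
    exact tSolvable_of_maxUnsolvableSize_lt hT hC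
  apply le_antisymm (Nat.sInf_le hmem)
  obtain ⟨C, hC, hns⟩ := exists_not_tSolvable hT r ht
  by_contra! hlt
  refine hns (Nat.sInf_mem ⟨_, hmem⟩ C ?_)
  rw [finsum_eq_sum_of_fintype]
  exact (Nat.lt_succ_iff.mp hlt).trans hC

/-! ### Moving the root -/

open Classical in
/-- The part of the pebbling number that is not accounted for by the eccentricity of the root. -/
noncomputable def excess (T : SimpleGraph V) (r : V) : ℤ :=
  ∑ u ∈ Finset.univ.erase r, (2 : ℤ) ^ branchHeight T r u - 2 ^ branchHeight T r r

theorem maxUnsolvableSize_eq (T : SimpleGraph V) (r : V) {t : ℕ} (ht : 1 ≤ t) :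
    (maxUnsolvableSize T r t : ℤ) = t * 2 ^ branchHeight T r r + excess T r := by
  obtain ⟨s, rfl⟩ := Nat.exists_eq_add_of_le' ht
  simp only [maxUnsolvableSize, excess]
  push_cast
  simp
  ring

theorem excess_sub_of_adj (hT : T.IsTree) {p u : V} (h : T.Adj p u) :
    excess T u - excess T p = 2 ^ branchHeight T u p - 2 ^ branchHeight T p u
      + 2 ^ branchHeight T p p - 2 ^ branchHeight T u u := by
  classical
  have e1 := Finset.add_sum_erase (Finset.univ.erase u) (fun w => (2 : ℤ) ^ branchHeight T u w)
    (a := p) (by simp [h.ne])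
  have e2 := Finset.add_sum_erase (Finset.univ.erase p) (fun w => (2 : ℤ) ^ branchHeight T p w)
    (a := u) (by simp [h.ne'])
  have e3 : ∑ w ∈ (Finset.univ.erase p).erase u, (2 : ℤ) ^ branchHeight T p w =
      ∑ w ∈ (Finset.univ.erase u).erase p, (2 : ℤ) ^ branchHeight T u w := by
    rw [Finset.erase_right_comm]
    refine Finset.sum_congr rfl fun w hw => ?_
    simp only [Finset.mem_erase] at hw
    rw [branchHeight_eq_of_adj_roots hT h hw.1 hw.2.1]
  simp only [excess]
  linarith

theorem excess_le_of_adj (hT : T.IsTree) {p u : V} (h : T.Adj p u) {q : ℤ}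
    (hp : excess T p ≤ q + 2 ^ min (branchHeight T u p) (diamG T / 2) - 1) :
    excess T u ≤ q + 2 ^ min (branchHeight T u p + 1) (diamG T / 2) - 1 := by
  have hd := excess_sub_of_adj hT h
  have hp' := branchHeight_root_eq_max hT h
  have hu' := branchHeight_root_eq_max hT h.symm
  have hdiam := branchHeight_add_le_diamG hT h
  generalize branchHeight T u p = b at *
  generalize branchHeight T p u = a at *
  rw [hp', hu'] at hd
  have hmono : (2 : ℤ) ^ min b (diamG T / 2) ≤ 2 ^ min (b + 1) (diamG T / 2) :=
    pow_le_pow_right₀ (by norm_num) (by omega)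
  rcases lt_trichotomy a b with hab | hab | hab
  · rw [max_eq_left (show a + 1 ≤ b by omega), max_eq_right (show a ≤ b + 1 by omega),
      pow_succ] at hd
    have : (0 : ℤ) < 2 ^ a := by positivity
    linarith
  · subst hab
    linarith
  · rw [max_eq_right (show b ≤ a + 1 by omega), max_eq_left (show b + 1 ≤ a by omega),
      pow_succ] at hd
    rw [min_eq_left (by omega)] at hp ⊢
    rw [pow_succ]
    linarith

theorem excess_le_along_edge (hT : T.IsTree) (s : V) : ∀ (n : ℕ) {u x : V}, T.Adj x u →
    T.dist s x = T.dist s u + 1 → T.dist s u = n →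
    excess T u ≤ excess T s + 2 ^ min (branchHeight T x u) (diamG T / 2) - 1 := by
  intro n
  induction n with
  | zero =>
    intro u x _ _ hn
    obtain rfl : s = u := hT.connected.dist_eq_zero_iff.mp hn
    have : (1 : ℤ) ≤ 2 ^ min (branchHeight T x s) (diamG T / 2) := one_le_pow₀ (by norm_num)
    linarith
  | succ n ih =>
    intro u x hx hdx hn
    have hus : u ≠ s := by
      rintro rfl
      simp at hn
    obtain ⟨p, hp, hdp⟩ := exists_adj_dist_eq_succ hT hus
    have hpx : p ≠ x := by
      rintro rfl
      omega
    have h1 := excess_le_of_adj hT hp.symm (ih hp hdp (by omega))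
    have hxp : T.dist x p = T.dist x u + 1 := by
      rcases hT.dist_eq_dist_add_one_of_adj x hp with h | h
      · rw [dist_eq_one_iff_adj.mpr hx] at h
        exact absurd (hT.connected.dist_eq_zero_iff.mp (by omega : T.dist x p = 0)).symm hpx
      · exact h
    have h2 := branchHeight_lt_of_parent hT hp.symm hxp
    rw [branchHeight_eq_of_adj_roots hT hx hpx hp.ne'] at h2
    have : (2 : ℤ) ^ min (branchHeight T u p + 1) (diamG T / 2) ≤
        2 ^ min (branchHeight T x u) (diamG T / 2) :=
      pow_le_pow_right₀ (by norm_num) (by omega)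
    linarith

theorem excess_le (hT : T.IsTree) (s r : V) :
    excess T r ≤ excess T s + 2 ^ (diamG T / 2) - 1 := by
  by_cases hrs : r = s
  · subst hrs
    have : (1 : ℤ) ≤ 2 ^ (diamG T / 2) := one_le_pow₀ (by norm_num)
    linarith
  · obtain ⟨p, hp, hdp⟩ := exists_adj_dist_eq_succ hT hrs
    have h1 := excess_le_of_adj hT hp.symm (excess_le_along_edge hT s _ hp hdp rfl)
    have : (2 : ℤ) ^ min (branchHeight T r p + 1) (diamG T / 2) ≤ 2 ^ (diamG T / 2) :=
      pow_le_pow_right₀ (by norm_num) (min_le_right _ _)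
    linarith

/-- A non-central root exists only if the diameter is at least two. -/
theorem two_le_diamG (hT : T.IsTree) {r : V} (hr : eccG T r < diamG T) : 2 ≤ diamG T := by
  by_contra! hlt
  have h0 : eccG T r = 0 := by omega
  rw [← branchHeight_self] at h0
  have hall : ∀ w, w = r := fun w => by
    have := le_branchHeight (T := T) (r := r) (u := r) (w := w) (by simp)
    exact (hT.connected.dist_eq_zero_iff.mp (by omega)).symm
  have : Nonempty V := ⟨r⟩
  have : diamG T ≤ 0 := ciSup_le fun u => ciSup_le fun v => by
    rw [hall u, hall v, dist_self]
  omega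

end TreePebbling

/-- in a tree `T` of diameter `d`, if `ecc(r*) = d` and `ecc(r) < d`,
then `π_t(T,r) ≤ π_t(T,r*) − 2^{d−2}`. -/
theorem tree_root_eccentricity_bound {V : Type} [Fintype V] (T : SimpleGraph V)
    (hconn : T.Connected) (hac : T.IsAcyclic) (d : ℕ) (hd : d = diamG T)
    (rstar r : V) (hstar : eccG T rstar = d) (hr : eccG T r < d)
    (t : ℕ) (ht : 1 ≤ t) :
    piT T r t + 2 ^ (d - 2) ≤ piT T rstar t := by
  have hT : T.IsTree := ⟨hconn, hac⟩
  subst hd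
  have h2 := TreePebbling.two_le_diamG hT hr
  have hle := TreePebbling.excess_le hT rstar r
  have hr' := TreePebbling.maxUnsolvableSize_eq T r ht
  have hs' := TreePebbling.maxUnsolvableSize_eq T rstar ht
  rw [TreePebbling.branchHeight_self] at hr' hs'
  rw [hstar] at hs'
  rw [TreePebbling.piT_eq hT r ht, TreePebbling.piT_eq hT rstar ht]
  obtain ⟨k, hk⟩ := Nat.exists_eq_add_of_le' h2
  rw [hk] at hle hr hs' ⊢
  have hecc : (2 : ℤ) ^ eccG T r ≤ 2 ^ (k + 1) := pow_le_pow_right₀ (by norm_num) (by omega)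
  have hhalf : (2 : ℤ) ^ ((k + 2) / 2) ≤ 2 ^ k + 1 := by
    rcases Nat.eq_zero_or_pos k with rfl | hk0
    · norm_num
    · have : (2 : ℤ) ^ ((k + 2) / 2) ≤ 2 ^ k := pow_le_pow_right₀ (by norm_num) (by omega)
      linarith
  have ht' : (1 : ℤ) ≤ t := by exact_mod_cast ht
  have hmul : (t : ℤ) * 2 ^ eccG T r ≤ t * 2 ^ (k + 1) :=
    mul_le_mul_of_nonneg_left hecc (by positivity)
  have hpos : (1 : ℤ) * 2 ^ k ≤ t * 2 ^ k := mul_le_mul_of_nonneg_right ht' (by positivity)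
  zify
  rw [hr', hs']
  rw [pow_succ] at hmul
  rw [pow_add]
  simp only [Nat.add_sub_cancel]
  linarith
end
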